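/- arXiv:1702.02490 — 3 statements merged into one kernel-verified Lean document; each statement's English description precedes it below -/
import Mathlib

section
/- Let H be a nonempty, monotone, regular subset of L⁰₊. Then H = H°° if and only if H is convex and closed under liminf. -/
/-!
If `H = H°°`, convexity is linearity of the integral and closedness under `liminf` is Fatou's
lemma.

Conversely, let `H` be convex and closed under `liminf`, and let `f ∈ H°°`. Regularity, together
with the inner approximation of Borel functions by bounded upper semicontinuous ones, gives
`⟨f, μ⟩ ≤ sup {⟨h, μ⟩ : h ∈ H ∩ C_b}` for every finite measure `μ`
(`lintegral_le_of_mem_bipolar`). If `f` is bounded and continuous on a compact set `C`, the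
Hahn–Banach and Riesz–Markov–Kakutani theorems on `C(C, ℝ)` turn this into pointwise domination:
for each `ε > 0` some `h ∈ H ∩ C_b` satisfies `f ≤ h + ε` on `C` (`exists_isCb_le_add`).

Passing from such sets `C` to an arbitrary compact set `K` is a capacitability argument. Refine the
topology of `K` to a Polish one making `f` continuous; then `K` is the image of a continuous
`φ : ℕ^ℕ → Ω` with `f ∘ φ` continuous. Call `B ⊆ ℕ^ℕ` good if `f ≤ h + a` on `φ '' B` for some
`h ∈ H`. Closedness under `liminf` shows that an increasing union of good sets is good. Hence, if
`ℕ^ℕ` were not good, there would be bounds `n i` such that no set `{σ | ∀ i < k, σ i ≤ n i}` is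
good. But `f` is continuous on the compact image of the box `∏ [0, n i]`, so it is dominated by
`h + a / 2` there with `h` continuous, hence by `h + a` on one of those sets, a contradiction
(`exists_forall_le_add_of_choquet`). Letting `a → 0` and taking `liminf` along an exhaustion of
`Ω` by compact sets and along the truncations `min f n` yields `f ∈ H`.
-/

open MeasureTheory Filter ENNReal NNReal

section Defs

variable {Ω : Type*} [TopologicalSpace Ω] [MeasurableSpace Ω]

/-- The polar of a set `H` of `[0,∞]`-valued Borel functions: all finite positive Borel
measures `μ` with `⟨f,μ⟩ = ∫ f dμ ≤ 1` for every `f ∈ H`. -/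
def polar (H : Set (Ω → ℝ≥0∞)) : Set (Measure Ω) :=
  {μ | IsFiniteMeasure μ ∧ ∀ f ∈ H, ∫⁻ x, f x ∂μ ≤ 1}

/-- The bipolar of a set `H` of `[0,∞]`-valued Borel functions. -/
def bipolar (H : Set (Ω → ℝ≥0∞)) : Set (Ω → ℝ≥0∞) :=
  {f | Measurable f ∧ ∀ μ ∈ polar H, ∫⁻ x, f x ∂μ ≤ 1}

/-- `h` is (the coercion of) a bounded continuous real-valued function. -/
def IsCb (h : Ω → ℝ≥0∞) : Prop :=
  Continuous h ∧ ∃ C : ℝ≥0, ∀ x, h x ≤ C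

/-- `h` is (the coercion of) a bounded upper semicontinuous real-valued function. -/
def IsUb (h : Ω → ℝ≥0∞) : Prop :=
  UpperSemicontinuous h ∧ ∃ C : ℝ≥0, ∀ x, h x ≤ C

/-- `H` is monotone: any nonnegative Borel function dominated by an element of `H`
belongs to `H`. -/
def MonotoneSet (H : Set (Ω → ℝ≥0∞)) : Prop :=
  ∀ f : Ω → ℝ≥0∞, Measurable f → (∃ h ∈ H, ∀ x, f x ≤ h x) → f ∈ H

/-- `H` is regular: for every finite positive Borel measure `μ`, the supremum of `⟨h,μ⟩`
over `H ∩ U_b` equals the supremum over `H ∩ C_b`. -/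
def RegularSet (H : Set (Ω → ℝ≥0∞)) : Prop :=
  ∀ μ : Measure Ω, IsFiniteMeasure μ →
    sSup {x : ℝ≥0∞ | ∃ h ∈ H, IsUb h ∧ x = ∫⁻ ω, h ω ∂μ} =
      sSup {x : ℝ≥0∞ | ∃ h ∈ H, IsCb h ∧ x = ∫⁻ ω, h ω ∂μ}

/-- `H` is closed under `liminf`: the pointwise `liminf` of any sequence in `H` is in `H`. -/
def LiminfClosed (H : Set (Ω → ℝ≥0∞)) : Prop :=
  ∀ h : ℕ → Ω → ℝ≥0∞, (∀ n, h n ∈ H) →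
    (fun x => liminf (fun n => h n x) atTop) ∈ H

/-- `H` is convex. -/
def ConvexSet (H : Set (Ω → ℝ≥0∞)) : Prop :=
  ∀ f ∈ H, ∀ g ∈ H, ∀ t : ℝ≥0∞, t ≤ 1 →
    (fun x => t * f x + (1 - t) * g x) ∈ H

end Defs

open Topology

section Helpers

/-! ### Separation on compact spaces and boxes in Baire space -/

/-- A minimax statement on a compact space: if no element of the convex set `A` of continuous
functions is everywhere below `ε > 0`, a single finite measure integrates all of `A` to values
bounded below by a positive constant. The measure represents a functional separating `A` from the
open convex set `{u | u < ε}`. -/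
lemma exists_measure_of_forall_exists_le {X : Type*} [TopologicalSpace X] [CompactSpace X]
    [T2Space X] [MeasurableSpace X] [BorelSpace X] {A : Set C(X, ℝ)} (hA : Convex ℝ A)
    {ε : ℝ} (hε : 0 < ε) (h : ∀ u ∈ A, ∃ x, ε ≤ u x) :
    ∃ ν : Measure X, IsFiniteMeasure ν ∧ ∃ c : ℝ, 0 < c ∧ ∀ u ∈ A, c ≤ ∫ x, u x ∂ν := by
  let N : Set C(X, ℝ) := {u | ∀ x, u x < ε}
  have hN_open : IsOpen N := by
    have := ContinuousMap.isOpen_setOfPred_mapsTo (X := X) (Y := ℝ) isCompact_univ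
      (isOpen_Iio (a := ε))
    simpa [Set.MapsTo] using this
  have hN_conv : Convex ℝ N := by
    intro u hu v hv a b ha hb hab x
    have h1 := hu x
    have h2 := hv x
    simp only [ContinuousMap.add_apply, ContinuousMap.smul_apply, smul_eq_mul]
    rcases ha.eq_or_lt with rfl | ha
    · have : b = 1 := by linarith
      subst this; simpa using h2
    · nlinarith
  have hdisj : Disjoint N A := by
    rw [Set.disjoint_left]
    intro u hu huA
    obtain ⟨x, hx⟩ := h u huA
    exact absurd (hu x) (not_lt.2 hx)
  obtain ⟨l, s, hs, hs'⟩ := geometric_hahn_banach_open hN_conv hN_open hA hdisj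
  have hs0 : 0 < s := by simpa using hs 0 (fun x => by simpa using hε)
  -- `l` is bounded above on the ray `-ℝ₊ g` for every `g ≥ 0`
  have hpos : ∀ g : C(X, ℝ), (∀ x, 0 ≤ g x) → 0 ≤ l g := by
    intro g hg
    by_contra! hneg
    obtain ⟨n, hn⟩ := exists_nat_gt (s / (- l g))
    have h1 := hs (-((n : ℝ) • g)) (fun x => by
      have : 0 ≤ (n : ℝ) * g x := mul_nonneg n.cast_nonneg (hg x)
      simp only [ContinuousMap.neg_apply, ContinuousMap.smul_apply, smul_eq_mul]
      linarith)
    rw [div_lt_iff₀ (by linarith)] at hn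
    simp only [map_neg, map_smul, smul_eq_mul] at h1
    linarith
  let L₀ : CompactlySupportedContinuousMap X ℝ →ₗ[ℝ] ℝ :=
    { toFun := fun g => l g.toContinuousMap
      map_add' := fun g g' => l.map_add g.toContinuousMap g'.toContinuousMap
      map_smul' := fun a g => l.map_smul a g.toContinuousMap }
  let L : CompactlySupportedContinuousMap X ℝ →ₚ[ℝ] ℝ :=
    PositiveLinearMap.mk₀ L₀ (fun g hg => hpos g.toContinuousMap (fun x => hg x))
  refine ⟨RealRMK.rieszMeasure L, inferInstance, s, hs0, fun u hu => ?_⟩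
  have := RealRMK.integral_rieszMeasure L (CompactlySupportedContinuousMap.continuousMapEquiv u)
  calc s ≤ l u := hs' u hu
    _ = ∫ x, u x ∂(RealRMK.rieszMeasure L) := this.symm

/-- An open set containing the compact box `∏ [0, n i]` of Baire space already contains the set cut
out by finitely many of the constraints `σ i ≤ n i`. -/
lemma exists_forall_le_subset_of_isOpen {n : ℕ → ℕ} {V : Set (ℕ → ℕ)} (hV : IsOpen V)
    (h : {σ : ℕ → ℕ | ∀ i, σ i ≤ n i} ⊆ V) :
    ∃ k, {σ : ℕ → ℕ | ∀ i < k, σ i ≤ n i} ⊆ V := by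
  have hP : IsCompact {σ : ℕ → ℕ | ∀ i, σ i ≤ n i} := by
    have := isCompact_univ_pi (fun i => (Set.finite_Iic (n i)).isCompact)
    simpa [Set.pi] using this
  let U : ℕ → Set (ℕ → ℕ) := fun k => {σ | PiNat.cylinder σ k ⊆ V}
  have hUo : ∀ k, IsOpen (U k) := by
    intro k
    rw [isOpen_iff_forall_mem_open]
    intro σ hσ
    refine ⟨PiNat.cylinder σ k, fun τ hτ => ?_, PiNat.isOpen_cylinder _ σ k,
      PiNat.self_mem_cylinder σ k⟩
    rw [PiNat.mem_cylinder_iff_eq] at hτ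
    simpa [U, hτ] using hσ
  have hcov : {σ : ℕ → ℕ | ∀ i, σ i ≤ n i} ⊆ ⋃ k, U k := by
    intro σ hσ
    obtain ⟨_, ⟨τ, k, rfl⟩, h1, h2⟩ :=
      (PiNat.isTopologicalBasis_cylinders (fun _ : ℕ => ℕ)).exists_subset_of_mem_open (h hσ) hV
    rw [PiNat.mem_cylinder_iff_eq] at h1
    exact Set.mem_iUnion.2 ⟨k, by simpa [U, h1] using h2⟩
  have hmon : Monotone U := fun a b hab σ hσ => (PiNat.cylinder_anti σ hab).trans hσ
  obtain ⟨k, hk⟩ := hP.elim_directed_cover U hUo hcov hmon.directed_le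
  refine ⟨k, fun σ hσ => ?_⟩
  -- truncate `σ` after `k` coordinates
  let τ : ℕ → ℕ := fun i => if i < k then σ i else 0
  have hτ : τ ∈ {σ : ℕ → ℕ | ∀ i, σ i ≤ n i} := by
    intro i
    by_cases hi : i < k
    · simpa [τ, hi] using hσ i hi
    · simp [τ, hi]
  refine hk hτ (PiNat.mem_cylinder_iff.2 fun i hi => ?_)
  simp [τ, hi]

/-! ### Duality on compact sets -/

variable {Ω : Type*} [MetricSpace Ω] [MeasurableSpace Ω] [BorelSpace Ω] {H : Set (Ω → ℝ≥0∞)}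

/-- For a finite measure, any bound on `⟨h, μ⟩` over the bounded upper semicontinuous elements of a
monotone set `H` holds on all of `H`, by inner approximation (Vitali–Carathéodory). -/
lemma lintegral_le_of_forall_isUb (hmeas : ∀ f ∈ H, Measurable f) (hmono : MonotoneSet H)
    {μ : Measure Ω} [IsFiniteMeasure μ] {r : ℝ≥0∞}
    (hr : ∀ h ∈ H, IsUb h → ∫⁻ x, h x ∂μ ≤ r) {h : Ω → ℝ≥0∞} (hh : h ∈ H) :
    ∫⁻ x, h x ∂μ ≤ r := by
  have hmin : ∀ x, h x = ⨆ n : ℕ, min (h x) n := by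
    intro x
    rw [← inf_iSup_eq, ENNReal.iSup_natCast, inf_top_eq]
  rw [lintegral_congr hmin]
  rw [lintegral_iSup (fun n => (hmeas h hh).min measurable_const)
    (fun a b hab x => min_le_min le_rfl (by exact_mod_cast hab))]
  refine iSup_le fun n => ?_
  have htop : ∀ x, min (h x) n ≠ ∞ := fun x => ne_top_of_le_ne_top (by simp) (min_le_right _ _)
  have hcoe : ∀ x, ((min (h x) n).toNNReal : ℝ≥0∞) = min (h x) n := fun x =>
    ENNReal.coe_toNNReal (htop x)
  have hfin : ∫⁻ x, ((min (h x) n).toNNReal : ℝ≥0∞) ∂μ ≠ ∞ := by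
    simp_rw [hcoe]
    refine ne_top_of_le_ne_top ?_ (lintegral_mono fun x => min_le_right (h x) (n : ℝ≥0∞))
    rw [lintegral_const]
    exact ENNReal.mul_ne_top (by simp) (measure_ne_top _ _)
  refine ENNReal.le_of_forall_pos_le_add fun ε hε _ => ?_
  obtain ⟨g, hg, hgu, hgi⟩ := exists_upperSemicontinuous_le_lintegral_le
    (fun x => (min (h x) n).toNNReal) hfin (ε := ε) (by simpa using hε.ne')
  simp_rw [hcoe] at hgi
  have hgle : ∀ x, (g x : ℝ≥0∞) ≤ min (h x) n := fun x => by
    rw [← hcoe]; exact_mod_cast hg x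
  have hgm : Measurable (fun x => (g x : ℝ≥0∞)) := hgu.measurable.coe_nnreal_ennreal
  refine hgi.trans (add_le_add_left (hr _ (hmono _ hgm ⟨h, hh, fun x => (hgle x).trans
    (min_le_left _ _)⟩) ⟨?_, n, fun x => ?_⟩) _)
  · exact ENNReal.continuous_coe.comp_upperSemicontinuous hgu ENNReal.coe_mono
  · simpa using (hgle x).trans (min_le_right _ _)

/-- By regularity, elements of the bipolar are controlled, for every finite measure, by the bounded
continuous elements of `H` alone. -/
lemma lintegral_le_of_mem_bipolar (hmeas : ∀ f ∈ H, Measurable f) (hmono : MonotoneSet H)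
    (hreg : RegularSet H) {f : Ω → ℝ≥0∞} (hf : f ∈ bipolar H) {μ : Measure Ω}
    [IsFiniteMeasure μ] {r : ℝ≥0∞} (hr : ∀ h ∈ H, IsCb h → ∫⁻ x, h x ∂μ ≤ r) :
    ∫⁻ x, f x ∂μ ≤ r := by
  have hU : ∀ h ∈ H, IsUb h → ∫⁻ x, h x ∂μ ≤ r := by
    intro h hh hu
    refine (le_sSup ⟨h, hh, hu, rfl⟩ : _ ≤ sSup {x : ℝ≥0∞ | ∃ h ∈ H, IsUb h ∧
      x = ∫⁻ ω, h ω ∂μ}).trans ?_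
    rw [hreg μ inferInstance]
    refine sSup_le ?_
    rintro _ ⟨g, hg, hgc, rfl⟩
    exact hr g hg hgc
  refine le_of_forall_gt fun q hq => ?_
  -- a finite constant strictly above `r` is nonzero, so `μ` may be divided by it
  obtain ⟨p, hp, hpq⟩ := exists_between hq
  have hp0 : p ≠ 0 := (bot_le.trans_lt hp).ne'
  have hpt : p ≠ ∞ := (hpq.trans_le le_top).ne
  have hfin : IsFiniteMeasure (p⁻¹ • μ) :=
    μ.smul_finite (ENNReal.inv_ne_top.2 hp0)
  have hpol : p⁻¹ • μ ∈ polar H := by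
    refine ⟨hfin, fun h hh => ?_⟩
    rw [lintegral_smul_measure, smul_eq_mul]
    calc p⁻¹ * ∫⁻ x, h x ∂μ ≤ p⁻¹ * p := by
          gcongr
          exact (lintegral_le_of_forall_isUb hmeas hmono hU hh).trans hp.le
      _ = 1 := ENNReal.inv_mul_cancel hp0 hpt
  have h1 := hf.2 _ hpol
  rw [lintegral_smul_measure, smul_eq_mul, mul_comm, ← div_eq_mul_inv,
    ENNReal.div_le_iff hp0 hpt, one_mul] at h1
  exact h1.trans_lt hpq

/-- On a compact set where `f ∈ H°°` is bounded and continuous, `f` is dominated, up to any `ε > 0`,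
by a bounded continuous element of `H`. -/
lemma exists_isCb_le_add (hmeas : ∀ f ∈ H, Measurable f) (hne : H.Nonempty) (hmono : MonotoneSet H)
    (hreg : RegularSet H) (hconv : ConvexSet H)
    {f : Ω → ℝ≥0∞} (hf : f ∈ bipolar H) {C : Set Ω} (hC : IsCompact C) {M : ℝ≥0}
    (hM : ∀ x ∈ C, f x ≤ M) (hcont : Continuous fun x : C => f x) {ε : ℝ} (hε : 0 < ε) :
    ∃ h ∈ H, IsCb h ∧ ∀ x ∈ C, f x ≤ h x + ENNReal.ofReal ε := by
  by_contra! hcon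
  have : CompactSpace C := isCompact_iff_compactSpace.1 hC
  have hft : ∀ x : C, f x ≠ ∞ := fun x => ne_top_of_le_ne_top (by simp) (hM x x.2)
  have hCbt : ∀ h : Ω → ℝ≥0∞, IsCb h → ∀ x, h x ≠ ∞ := fun h ⟨_, c, hc⟩ x =>
    ne_top_of_le_ne_top (by simp) (hc x)
  let A : Set C(C, ℝ) := {u | ∃ h ∈ H, IsCb h ∧ ∀ x, u x = (f x).toReal - (h x).toReal}
  have hA : Convex ℝ A := by
    rintro u ⟨h, hh, hhc, hu⟩ v ⟨g, hg, hgc, hv⟩ a b ha hb hab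
    have hb' : 1 - ENNReal.ofReal a = ENNReal.ofReal b := by
      rw [← ENNReal.ofReal_one, ← ENNReal.ofReal_sub _ ha]; congr 1; linarith
    refine ⟨_, hconv h hh g hg (ENNReal.ofReal a) (by
      rw [← ENNReal.ofReal_one]; exact ENNReal.ofReal_le_ofReal (by linarith)), ?_, fun x => ?_⟩
    · rw [hb']
      obtain ⟨hhc, c, hc⟩ := hhc
      obtain ⟨hgc, d, hd⟩ := hgc
      refine ⟨((ENNReal.continuous_const_mul ENNReal.ofReal_ne_top).comp hhc).add
        ((ENNReal.continuous_const_mul ENNReal.ofReal_ne_top).comp hgc),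
        a.toNNReal * c + b.toNNReal * d, fun x => ?_⟩
      push_cast
      have h1 := hc x
      have h2 := hd x
      exact add_le_add (mul_le_mul_right h1 _) (mul_le_mul_right h2 _)
    · simp only [ContinuousMap.add_apply, ContinuousMap.smul_apply, smul_eq_mul, hu x, hv x]
      rw [hb', ENNReal.toReal_add (ENNReal.mul_ne_top ENNReal.ofReal_ne_top (hCbt h hhc x))
        (ENNReal.mul_ne_top ENNReal.ofReal_ne_top (hCbt g hgc x)), ENNReal.toReal_mul,
        ENNReal.toReal_mul, ENNReal.toReal_ofReal ha, ENNReal.toReal_ofReal hb]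
      linear_combination (f x).toReal * hab
  have hex : ∀ u ∈ A, ∃ x, ε ≤ u x := by
    rintro u ⟨h, hh, hhc, hu⟩
    obtain ⟨x, hx, hlt⟩ := hcon h hh hhc
    refine ⟨⟨x, hx⟩, ?_⟩
    have := ENNReal.toReal_mono (hft ⟨x, hx⟩) hlt.le
    rw [ENNReal.toReal_add (hCbt h hhc x) ENNReal.ofReal_ne_top, ENNReal.toReal_ofReal hε.le]
      at this
    rw [hu]
    dsimp only
    linarith
  obtain ⟨ν, hν, c, hc, hcA⟩ := exists_measure_of_forall_exists_le hA hε hex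
  have hmap : ∀ g : Ω → ℝ≥0∞, Measurable g →
      ∫⁻ x, g x ∂(ν.map Subtype.val) = ∫⁻ x : C, g x ∂ν := fun g hg =>
    lintegral_map hg measurable_subtype_coe
  have hfinf : ∫⁻ x, f x ∂(ν.map Subtype.val) ≠ ∞ := by
    rw [hmap f hf.1]
    refine ne_top_of_le_ne_top ?_ (lintegral_mono fun x : C => hM x x.2)
    rw [lintegral_const]
    exact ENNReal.mul_ne_top (by simp) (measure_ne_top _ _)
  have hcontf : Continuous fun x : C => (f x).toReal :=
    ENNReal.continuousOn_toReal.comp_continuous hcont hft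
  have key : ∀ h ∈ H, IsCb h →
      ∫⁻ x, h x ∂(ν.map Subtype.val) + ENNReal.ofReal c ≤ ∫⁻ x, f x ∂(ν.map Subtype.val) := by
    intro h hh hhc
    have hconth : Continuous fun x : C => (h x).toReal :=
      ENNReal.continuousOn_toReal.comp_continuous (hhc.1.comp continuous_subtype_val)
        (fun x => hCbt h hhc x)
    have hint : ∀ g : C → ℝ, Continuous g → Integrable g ν := fun g hg =>
      hg.integrable_of_hasCompactSupport (HasCompactSupport.of_compactSpace g)
    have h1 : c ≤ ∫ x : C, ((f x).toReal - (h x).toReal) ∂ν :=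
      hcA ⟨_, hcontf.sub hconth⟩ ⟨h, hh, hhc, fun x => rfl⟩
    rw [integral_sub (hint _ hcontf) (hint _ hconth)] at h1
    have hof : ∀ g : Ω → ℝ≥0∞, (∀ x : C, g x ≠ ∞) → Continuous (fun x : C => (g x).toReal) →
        ∫⁻ x : C, g x ∂ν = ENNReal.ofReal (∫ x : C, (g x).toReal ∂ν) := by
      intro g hg hgc
      rw [ofReal_integral_eq_lintegral_ofReal (hint _ hgc)
        (Eventually.of_forall fun x => ENNReal.toReal_nonneg)]
      exact lintegral_congr fun x => (ENNReal.ofReal_toReal (hg x)).symm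
    rw [hmap f hf.1, hmap h (hmeas h hh), hof f hft hcontf,
      hof h (fun x => hCbt h hhc x) hconth,
      ← ENNReal.ofReal_add (integral_nonneg fun x => ENNReal.toReal_nonneg) hc.le]
    exact ENNReal.ofReal_le_ofReal (by linarith)
  have h2 := lintegral_le_of_mem_bipolar hmeas hmono hreg hf (μ := ν.map Subtype.val)
    (r := ∫⁻ x, f x ∂(ν.map Subtype.val) - ENNReal.ofReal c)
    (fun h hh hhc => ENNReal.le_sub_of_add_le_right ENNReal.ofReal_ne_top (key h hh hhc))
  have h0 : (fun _ => 0) ∈ H := hmono _ measurable_const (hne.imp fun h hh => ⟨hh, by simp⟩)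
  have h3 := key _ h0 ⟨continuous_const, 0, by simp⟩
  have hc0 : ENNReal.ofReal c ≠ 0 := by simpa using hc
  have hf0 : ∫⁻ x, f x ∂(ν.map Subtype.val) ≠ 0 := by
    intro h
    rw [h] at h3
    simp [hc.not_ge] at h3
  exact h2.not_gt (ENNReal.sub_lt_self hfinf hf0 hc0)

/-! ### Capacitability -/

/-- Choquet's capacitability argument: `f ∈ H°°` is dominated up to `a > 0` by an element of `H` on
the whole range of `φ`, although domination by `exists_isCb_le_add` is available only on compact
sets. If domination failed on the range, boxes in Baire space could be chosen coordinate by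
coordinate so that it keeps failing, contradicting domination near the compact limit box. -/
lemma exists_forall_le_add_of_choquet (hmeas : ∀ f ∈ H, Measurable f) (hne : H.Nonempty)
    (hmono : MonotoneSet H) (hreg : RegularSet H) (hconv : ConvexSet H) (hlim : LiminfClosed H)
    {f : Ω → ℝ≥0∞} (hf : f ∈ bipolar H) {M : ℝ≥0} (hM : ∀ x, f x ≤ M)
    {φ : (ℕ → ℕ) → Ω} (hφ : Continuous φ) (hfφ : Continuous fun σ => f (φ σ))
    {a : ℝ} (ha : 0 < a) :
    ∃ h ∈ H, ∀ σ, f (φ σ) ≤ h (φ σ) + ENNReal.ofReal a := by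
  by_contra hbad
  -- `Good B` says that `f ≤ h + a` on `φ '' B` for some `h ∈ H`
  let Good : Set (ℕ → ℕ) → Prop := fun B =>
    ∃ h ∈ H, ∀ σ ∈ B, f (φ σ) ≤ h (φ σ) + ENNReal.ofReal a
  -- closure under `liminf` makes `Good` stable under increasing unions
  have hstep : ∀ (k : ℕ) (B : Set (ℕ → ℕ)), ∃ m : ℕ, ¬ Good B → ¬ Good (B ∩ {σ | σ k ≤ m}) := by
    intro k B
    by_contra! hall
    obtain ⟨hB, -⟩ := hall 0
    choose _ h hh hle using hall
    refine hB ⟨_, hlim h hh, fun σ hσ => ?_⟩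
    rw [← tsub_le_iff_right]
    refine le_liminf_of_le (by isBoundedDefault) ?_
    filter_upwards [eventually_ge_atTop (σ k)] with m hm
    exact tsub_le_iff_right.2 (hle m σ ⟨hσ, hm⟩)
  choose m hm using hstep
  let S : ℕ → Set (ℕ → ℕ) := fun k =>
    Nat.rec Set.univ (fun k B => B ∩ {σ | σ k ≤ m k B}) k
  let n : ℕ → ℕ := fun k => m k (S k)
  have hS : ∀ k, S k = {σ | ∀ i < k, σ i ≤ n i} := by
    intro k
    induction k with
    | zero => simp [S]
    | succ k ih =>
      have : S (k + 1) = S k ∩ {σ | σ k ≤ n k} := rfl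
      rw [this, ih]
      ext σ
      simp only [Set.mem_inter_iff, Set.mem_ofPred_eq]
      exact ⟨fun h i hi => (Nat.lt_succ_iff_lt_or_eq.1 hi).elim (h.1 i) (fun e => e ▸ h.2),
        fun h => ⟨fun i hi => h i (hi.trans k.lt_succ_self), h k k.lt_succ_self⟩⟩
  have hSbad : ∀ k, ¬ Good (S k) := by
    intro k
    induction k with
    | zero =>
      rintro ⟨h, hh, hle⟩
      exact hbad ⟨h, hh, fun σ => hle σ (Set.mem_univ σ)⟩
    | succ k ih => exact hm k (S k) ih
  let P : Set (ℕ → ℕ) := {σ | ∀ i, σ i ≤ n i}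
  have hP : IsCompact P := by
    have := isCompact_univ_pi (fun i => (Set.finite_Iic (n i)).isCompact)
    simpa [Set.pi, P] using this
  have hC : IsCompact (φ '' P) := hP.image hφ
  -- `φ` restricts to a quotient map `P → φ '' P`, so `f` is continuous on the compact set `φ '' P`
  have hcont : Continuous fun x : φ '' P => f x := by
    have : CompactSpace P := isCompact_iff_compactSpace.1 hP
    let q : P → φ '' P := fun σ => ⟨φ σ, Set.mem_image_of_mem φ σ.2⟩
    have hq : Continuous q := (hφ.comp continuous_subtype_val).subtype_mk _
    have hqs : Function.Surjective q := by
      rintro ⟨_, σ, hσ, rfl⟩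
      exact ⟨⟨σ, hσ⟩, rfl⟩
    have hqm : IsQuotientMap q := hq.isClosedMap.isQuotientMap hq hqs
    rw [hqm.continuous_iff]
    exact hfφ.comp continuous_subtype_val
  obtain ⟨h, hh, ⟨hhc, c, hc⟩, hle⟩ := exists_isCb_le_add hmeas hne hmono hreg hconv hf hC
    (fun x _ => hM x) hcont (half_pos ha)
  let V : Set (ℕ → ℕ) := {σ | f (φ σ) < h (φ σ) + ENNReal.ofReal a}
  have hV : IsOpen V := isOpen_lt hfφ ((hhc.comp hφ).add continuous_const)
  have hPV : P ⊆ V := fun σ hσ => (hle _ (Set.mem_image_of_mem φ hσ)).trans_lt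
    (ENNReal.add_lt_add_left (ne_top_of_le_ne_top (by simp) (hc _))
      ((ENNReal.ofReal_lt_ofReal_iff ha).2 (half_lt_self ha)))
  obtain ⟨k, hk⟩ := exists_forall_le_subset_of_isOpen hV hPV
  rw [← hS] at hk
  exact hSbad k ⟨h, hh, fun σ hσ => (hk hσ).le⟩

/-- A bounded `f ∈ H°°` restricted to a compact set `K` lies in `H`. Refining the topology of `K` to
a Polish one for which `f` is continuous presents `K` as a continuous image of Baire space along
which `f` is continuous too. -/
lemma indicator_mem_of_mem_bipolar (hmeas : ∀ f ∈ H, Measurable f) (hne : H.Nonempty)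
    (hmono : MonotoneSet H) (hreg : RegularSet H) (hconv : ConvexSet H) (hlim : LiminfClosed H)
    {f : Ω → ℝ≥0∞} (hf : f ∈ bipolar H) {M : ℝ≥0} (hM : ∀ x, f x ≤ M)
    {K : Set Ω} (hK : IsCompact K) : K.indicator f ∈ H := by
  have hind : Measurable (K.indicator f) := hf.1.indicator hK.measurableSet
  rcases K.eq_empty_or_nonempty with rfl | hKne
  · exact hmono _ hind (hne.imp fun h hh => ⟨hh, by simp⟩)
  have : CompactSpace K := isCompact_iff_compactSpace.1 hK
  have : Nonempty K := hKne.to_subtype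
  obtain ⟨t', ht', hft', hpol⟩ :=
    (hf.1.comp measurable_subtype_coe : Measurable fun x : K => f x).exists_continuous
  obtain ⟨ψ, hψ, hψs⟩ := @PolishSpace.exists_nat_nat_continuous_surjective K t' hpol _
  have hφ : Continuous fun σ => (ψ σ : Ω) :=
    @Continuous.comp _ _ _ _ instTopologicalSpaceSubtype _ _ _ continuous_subtype_val
      (continuous_le_rng ht' hψ)
  have hfφ : Continuous fun σ => f (ψ σ) := @Continuous.comp _ _ _ _ t' _ _ _ hft' hψ
  choose h hh hle using fun n : ℕ => exists_forall_le_add_of_choquet hmeas hne hmono hreg hconv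
    hlim hf hM hφ hfφ (Nat.one_div_pos_of_nat (n := n) (α := ℝ))
  refine hmono _ hind ⟨_, hlim h hh, fun x => ?_⟩
  by_cases hx : x ∈ K
  · rw [Set.indicator_of_mem hx]
    obtain ⟨σ, hσ⟩ := hψs ⟨x, hx⟩
    have h1 : Tendsto (fun n : ℕ => f x - ENNReal.ofReal (1 / ((n : ℝ) + 1))) atTop
        (𝓝 (f x)) := by
      have h2 : Tendsto (fun n : ℕ => ENNReal.ofReal (1 / ((n : ℝ) + 1))) atTop (𝓝 0) := by
        simpa using ENNReal.tendsto_ofReal (tendsto_one_div_add_atTop_nhds_zero_nat (𝕜 := ℝ))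
      simpa using ENNReal.Tendsto.sub (tendsto_const_nhds (x := f x)) h2
        (Or.inr ENNReal.zero_ne_top)
    rw [← h1.liminf_eq]
    refine liminf_le_liminf (Eventually.of_forall fun n => tsub_le_iff_right.2 ?_)
    have := hle n σ
    rwa [hσ] at this
  · simp [Set.indicator_of_notMem hx]

lemma bipolar_subset [SigmaCompactSpace Ω] (hmeas : ∀ f ∈ H, Measurable f) (hne : H.Nonempty)
    (hmono : MonotoneSet H) (hreg : RegularSet H) (hconv : ConvexSet H) (hlim : LiminfClosed H) :
    bipolar H ⊆ H := by
  intro f hf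
  have hmem : ∀ n : ℕ, (compactCovering Ω n).indicator (fun x => min (f x) n) ∈ H := by
    intro n
    refine indicator_mem_of_mem_bipolar hmeas hne hmono hreg hconv hlim
      ⟨hf.1.min measurable_const, fun μ hμ => ?_⟩ (M := n) (fun x => ?_)
      (isCompact_compactCovering Ω n)
    · exact (lintegral_mono fun x => min_le_left _ _).trans (hf.2 μ hμ)
    · simp
  convert hlim _ hmem using 1
  ext x
  have h1 : Tendsto (fun n : ℕ => min (f x) (n : ℝ≥0∞)) atTop (𝓝 (f x)) := by
    simpa using (tendsto_const_nhds (x := f x)).min ENNReal.tendsto_nat_nhds_top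
  refine (Tendsto.liminf_eq (h1.congr' ?_)).symm
  obtain ⟨N, hN⟩ := exists_mem_compactCovering x
  filter_upwards [eventually_ge_atTop N] with n hn
  rw [Set.indicator_of_mem (compactCovering_subset Ω hn hN)]

end Helpers

/-! ### The bipolar theorem -/

/-- **A pointwise bipolar theorem** (Theorem 1.1 in Bartl–Kupper, "A pointwise bipolar
theorem"): let `Ω` be a σ-compact metric space and let `H` be a nonempty monotone regular
set of Borel measurable functions `Ω → [0,∞]`.  Then `H = H°°` if and only if `H` is
convex and closed under `liminf`. -/
theorem pointwise_bipolar
    {Ω : Type*} [MetricSpace Ω] [SigmaCompactSpace Ω]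
    [MeasurableSpace Ω] [BorelSpace Ω]
    (H : Set (Ω → ℝ≥0∞)) (hmeas : ∀ f ∈ H, Measurable f)
    (hne : H.Nonempty) (hmono : MonotoneSet H) (hreg : RegularSet H) :
    H = bipolar H ↔ (ConvexSet H ∧ LiminfClosed H) := by
  constructor
  · intro hH
    refine ⟨fun f hf g hg t ht => ?_, fun h hh => ?_⟩
    · have hfm := hmeas f hf
      have hgm := hmeas g hg
      rw [hH]
      refine ⟨(hfm.const_mul _).add (hgm.const_mul _), fun μ hμ => ?_⟩
      rw [lintegral_add_left (hfm.const_mul _), lintegral_const_mul _ hfm,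
        lintegral_const_mul _ hgm]
      calc t * ∫⁻ x, f x ∂μ + (1 - t) * ∫⁻ x, g x ∂μ ≤ t * 1 + (1 - t) * 1 := by
            gcongr
            · exact hμ.2 f hf
            · exact hμ.2 g hg
        _ = 1 := by rw [mul_one, mul_one, add_tsub_cancel_of_le ht]
    · have hm := fun n => hmeas _ (hh n)
      rw [hH]
      refine ⟨Measurable.liminf hm, fun μ hμ => ?_⟩
      refine (lintegral_liminf_le hm).trans ?_
      exact liminf_le_of_le (by isBoundedDefault) fun b hb => by
        obtain ⟨n, hn⟩ := hb.exists
        exact hn.trans (hμ.2 _ (hh n))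
  · rintro ⟨hconv, hlim⟩
    exact Set.Subset.antisymm (fun f hf => ⟨hmeas f hf, fun μ hμ => hμ.2 f hf⟩)
      (bipolar_subset hmeas hne hmono hreg hconv hlim)
end

section
/- Let φ : L⁰₊ → [0,+∞] be a convex increasing functional such that the level set {φ ≤ c} is nonempty and regular for every c ∈ ℝ. Define φ*(μ) := sup_{f ∈ L⁰₊} (⟨f,μ⟩ − φ(f)) for μ ∈ ca₊, with the convention +∞ − ∞ := −∞. Then φ(f) = sup_{μ ∈ ca₊} (⟨f,μ⟩ − φ*(μ)) for all f ∈ L⁰₊ if and only if φ(f) ≤ liminf_n φ(f_n) for every sequence (f_n) in L⁰₊ converging pointwise to some f ∈ L⁰₊. -/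
/-!
That the duality implies the Fatou property is Fatou's lemma, applied to each `μ`. Conversely,
assume the Fatou property and let `c < φ f`; a finite measure `μ` with `c + φ*(μ) ≤ ⟨f,μ⟩` is
needed. By σ-compactness and the Fatou property `f` may be taken bounded and supported in a compact
set `K`. No tightness is available, so `φ` is replaced by its inf-convolution with a large multiple
of the supremum norm on `K`, with epigraph `Epi φ K N`:
`φ_N(w) = inf {φ h + N s : w ≤ h + s on K}`.

* Dominating functions can be replaced by pointwise `liminf`s along subsequences, which makes `φ_N`
  continuous from below on all functions, measurable or not, and shows `φ_N(f) > c` for large `N`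
  (`Epi.of_tendsto`, `le_of_forall_epi`).
* A Choquet capacitability argument over the Baire space then yields an upper semicontinuous
  `g ≤ f` such that `φ_N(u) > c` for every continuous `u > g` (`exists_usc_le_of_not_epi`).
* On `C(K)` the functional `φ_N` is finite, convex and Lipschitz. Hahn–Banach separates its epigraph
  from `{u > g} × (-∞, c]`, and the Riesz–Markov–Kakutani theorem turns the separating functional
  into a measure `μ` and a constant `β` with `⟨u,μ⟩ ≤ φ_N(u) + β` for `u ∈ C(K)` and
  `c + β ≤ ⟨v,μ⟩` for continuous `v > g` (`exists_measure_separating`). Approximating `g` by such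
  `v` gives `c + β ≤ ⟨g,μ⟩ ≤ ⟨f,μ⟩`.
* Regularity enters only here: the bound `⟨h,μ⟩ ≤ φ h + β` for `h ∈ C_b(Ω)`, which follows by
  restricting `h` to `K`, extends to all Borel functions, so that `φ*(μ) ≤ β`
  (`lintegral_le_of_isCb`).
-/

open MeasureTheory Filter ENNReal NNReal

/-! ### The Fatou property and the inf-convolution -/

/-- A convex increasing functional on the `[0,∞]`-valued Borel functions which vanishes at `0`
and has the Fatou property along pointwise convergent sequences. -/
structure FatouConvex {Ω : Type*} [MeasurableSpace Ω] (φ : (Ω → ℝ≥0∞) → ℝ≥0∞) : Prop where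
  conv : ∀ f g : Ω → ℝ≥0∞, Measurable f → Measurable g → ∀ t : ℝ≥0∞, t ≤ 1 →
    φ (fun x => t * f x + (1 - t) * g x) ≤ t * φ f + (1 - t) * φ g
  incr : ∀ f g : Ω → ℝ≥0∞, Measurable f → Measurable g → (∀ x, f x ≤ g x) → φ f ≤ φ g
  zero : φ (fun _ => 0) = 0
  fatou : ∀ (fn : ℕ → Ω → ℝ≥0∞) (f : Ω → ℝ≥0∞), (∀ n, Measurable (fn n)) → Measurable f →
    (∀ x, Tendsto (fun n => fn n x) atTop (nhds (f x))) → φ f ≤ liminf (fun n => φ (fn n)) atTop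

/-- For increasing functionals, the Fatou property along convergent sequences upgrades to
arbitrary sequences: apply it to the increasing sequence of tail infima. -/
lemma FatouConvex.le_liminf {Ω : Type*} [MeasurableSpace Ω] {φ : (Ω → ℝ≥0∞) → ℝ≥0∞}
    (H : FatouConvex φ) (h : ℕ → Ω → ℝ≥0∞) (hm : ∀ n, Measurable (h n)) :
    φ (fun x => liminf (fun n => h n x) atTop) ≤ liminf (fun n => φ (h n)) atTop := by
  have hmi : ∀ n, Measurable (fun x => ⨅ i : ℕ, h (i + n) x) := fun n =>
    Measurable.iInf fun i => hm _
  refine (H.fatou (fun n x => ⨅ i : ℕ, h (i + n) x) _ hmi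
    (Measurable.liminf hm) fun x => ?_).trans ?_
  · rw [liminf_eq_iSup_iInf_of_nat']
    refine tendsto_atTop_iSup fun a b hab => le_iInf fun i => ?_
    refine (iInf_le _ (i + (b - a))).trans (le_of_eq ?_)
    congr 1
    omega
  · refine liminf_le_liminf (Eventually.of_forall fun n => ?_)
    refine H.incr _ _ (hmi n) (hm n) fun x => ?_
    simpa using iInf_le (fun i : ℕ => h (i + n) x) 0

lemma le_liminf_add_of_tendsto {w : ℝ≥0∞} {a s : ℕ → ℝ≥0∞} {s₀ : ℝ≥0∞}
    (hs : Tendsto s atTop (nhds s₀)) (hw : ∀ᶠ n in atTop, w ≤ a n + s n) :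
    w ≤ liminf a atTop + s₀ := by
  by_cases h : s₀ = ∞
  · simp [h]
  rw [← tsub_le_iff_right]
  have h1 : Tendsto (fun n => w - s n) atTop (nhds (w - s₀)) :=
    ENNReal.Tendsto.sub tendsto_const_nhds hs (Or.inr h)
  rw [← h1.liminf_eq]
  refine liminf_le_liminf ?_
  filter_upwards [hw] with n hn
  exact tsub_le_iff_right.2 hn

/-- The epigraph of the inf-convolution of `φ` (restricted to the set `K`) with `N` times the
supremum norm: `r` dominates `φ h + N s` for some Borel `h` and constant `s` with `w ≤ h + s`
on `K`.  The function `w` need not be measurable. -/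
def Epi {Ω : Type*} [MeasurableSpace Ω] (φ : (Ω → ℝ≥0∞) → ℝ≥0∞) (K : Set Ω) (N : ℝ≥0)
    (w : K → ℝ≥0∞) (r : ℝ≥0∞) : Prop :=
  ∃ (h : Ω → ℝ≥0∞) (s : ℝ≥0∞), Measurable h ∧ (∀ x : K, w x ≤ h x + s) ∧ φ h + N * s ≤ r

section EpiLemmas

variable {Ω : Type*} [MeasurableSpace Ω] {φ : (Ω → ℝ≥0∞) → ℝ≥0∞} {K : Set Ω} {N : ℝ≥0}

lemma Epi.mono {w w' : K → ℝ≥0∞} {r r' : ℝ≥0∞} (h : Epi φ K N w r) (hw : ∀ x, w' x ≤ w x)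
    (hr : r ≤ r') : Epi φ K N w' r' := by
  obtain ⟨g, s, hg, h1, h2⟩ := h
  exact ⟨g, s, hg, fun x => (hw x).trans (h1 x), h2.trans hr⟩

/-- The epigraph is closed under increasing limits in the function and convergence in the
value: pass to a subsequence along which the constants and the values of `φ` converge, and take
the pointwise `liminf` of the dominating functions. -/
lemma Epi.of_tendsto (H : FatouConvex φ) {w : ℕ → K → ℝ≥0∞} {w₀ : K → ℝ≥0∞} {r : ℕ → ℝ≥0∞}
    {r₀ : ℝ≥0∞} (hw : ∀ x, Monotone fun n => w n x) (hw₀ : ∀ x, w₀ x ≤ ⨆ n, w n x)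
    (hr : Tendsto r atTop (nhds r₀)) (h : ∀ n, Epi φ K N (w n) (r n)) : Epi φ K N w₀ r₀ := by
  choose g s hg h1 h2 using h
  obtain ⟨⟨s₀, p₀⟩, θ, hθ, hlim⟩ := CompactSpace.tendsto_subseq fun n => (s n, φ (g n))
  have hs : Tendsto (fun n => s (θ n)) atTop (nhds s₀) := (continuous_fst.tendsto _).comp hlim
  have hp : Tendsto (fun n => φ (g (θ n))) atTop (nhds p₀) :=
    (continuous_snd.tendsto _).comp hlim
  refine ⟨fun x => liminf (fun n => g (θ n) x) atTop, s₀, Measurable.liminf fun n => hg _,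
    fun x => (hw₀ x).trans (iSup_le fun k => ?_), ?_⟩
  · refine le_liminf_add_of_tendsto hs ?_
    filter_upwards [eventually_ge_atTop k] with n hn
    exact (hw x (hn.trans (hθ.id_le n))).trans (h1 _ x)
  · have h3 := H.le_liminf (fun n => g (θ n)) fun n => hg _
    rw [hp.liminf_eq] at h3
    refine (add_le_add_left h3 _).trans ?_
    refine le_of_tendsto_of_tendsto' (hp.add (ENNReal.Tendsto.const_mul hs (Or.inr coe_ne_top)))
      (hr.comp hθ.tendsto_atTop) fun n => h2 _

lemma Epi.convex (H : FatouConvex φ) {w w' : K → ℝ≥0∞} {r r' : ℝ≥0∞} (h : Epi φ K N w r)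
    (h' : Epi φ K N w' r') (t : ℝ≥0∞) (ht : t ≤ 1) :
    Epi φ K N (fun x => t * w x + (1 - t) * w' x) (t * r + (1 - t) * r') := by
  obtain ⟨g, s, hg, h1, h2⟩ := h
  obtain ⟨g', s', hg', h1', h2'⟩ := h'
  refine ⟨fun x => t * g x + (1 - t) * g' x, t * s + (1 - t) * s',
    (hg.const_mul _).add (hg'.const_mul _), fun x => ?_, ?_⟩
  · calc t * w x + (1 - t) * w' x ≤ t * (g x + s) + (1 - t) * (g' x + s') := by
          gcongr
          exacts [h1 x, h1' x]
      _ = _ := by ring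
  · calc _ ≤ (t * φ g + (1 - t) * φ g') + N * (t * s + (1 - t) * s') := by
          gcongr
          exact H.conv _ _ hg hg' t ht
      _ = t * (φ g + N * s) + (1 - t) * (φ g' + N * s') := by ring
      _ ≤ _ := by gcongr

lemma Epi.add_const {w w' : K → ℝ≥0∞} {r δ : ℝ≥0∞} (h : Epi φ K N w r)
    (hw : ∀ x, w' x ≤ w x + δ) : Epi φ K N w' (r + N * δ) := by
  obtain ⟨g, s, hg, h1, h2⟩ := h
  refine ⟨g, s + δ, hg, fun x => ?_, ?_⟩
  · rw [← add_assoc]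
    exact (hw x).trans (by gcongr; exact h1 x)
  · rw [mul_add, ← add_assoc]
    gcongr

lemma Epi.const (H : FatouConvex φ) (δ : ℝ≥0∞) : Epi φ K N (fun _ => δ) (N * δ) :=
  ⟨fun _ => 0, δ, measurable_const, fun _ => by simp, by simp [H.zero]⟩

/-- The inf-convolution whose epigraph is `Epi φ K N`. -/
noncomputable def infConv {Ω : Type*} [MeasurableSpace Ω] (φ : (Ω → ℝ≥0∞) → ℝ≥0∞) (K : Set Ω)
    (N : ℝ≥0) (w : K → ℝ≥0∞) : ℝ≥0∞ := sInf {r | Epi φ K N w r}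

lemma infConv_le_iff (H : FatouConvex φ) {w : K → ℝ≥0∞} {r : ℝ≥0∞} :
    infConv φ K N w ≤ r ↔ Epi φ K N w r := by
  refine ⟨fun h => ?_, fun h => sInf_le h⟩
  have hne : {r | Epi φ K N w r}.Nonempty :=
    ⟨N * ∞, (Epi.const H ∞).mono (fun _ => le_top) le_rfl⟩
  obtain ⟨u, -, hu, hu'⟩ := exists_seq_tendsto_sInf hne (OrderBot.bddBelow _)
  exact (Epi.of_tendsto H (w := fun _ => w) (fun _ => monotone_const)
    (fun x => le_iSup (fun _ : ℕ => w x) 0) hu hu').mono (fun _ => le_rfl) h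

/-- As the Lipschitz constant `N` increases, the inf-convolutions recover `φ` on functions
supported in `K`. -/
lemma le_of_forall_epi (H : FatouConvex φ) {f : Ω → ℝ≥0∞} (hf : Measurable f)
    (hfK : ∀ x ∉ K, f x = 0) {c : ℝ≥0} (h : ∀ N : ℕ, Epi φ K N (fun x => f x) c) :
    φ f ≤ c := by
  choose g s hg h1 h2 using h
  have hs : Tendsto s atTop (nhds 0) := by
    refine tendsto_of_tendsto_of_tendsto_of_le_of_le' tendsto_const_nhds
      (h := fun n : ℕ => (c : ℝ≥0∞) / n) ?_ (Eventually.of_forall fun _ => zero_le) ?_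
    · simpa using ENNReal.Tendsto.const_div tendsto_nat_nhds_top (Or.inr coe_ne_top)
    · filter_upwards [eventually_gt_atTop 0] with n hn
      rw [ENNReal.le_div_iff_mul_le (Or.inl (by simpa using hn.ne')) (Or.inl (by simp)), mul_comm]
      simpa using (le_add_self).trans (h2 n)
  have hle : ∀ x, f x ≤ liminf (fun n => g n x) atTop := fun x => by
    by_cases hx : x ∈ K
    · simpa using le_liminf_add_of_tendsto hs (Eventually.of_forall fun n => h1 n ⟨x, hx⟩)
    · simp [hfK x hx]
  refine (H.incr _ _ hf (Measurable.liminf hg) hle).trans ((H.le_liminf g hg).trans ?_)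
  refine (liminf_le_liminf (v := fun _ => (c : ℝ≥0∞))
    (Eventually.of_forall fun n => le_self_add.trans (h2 n))).trans ?_
  simp

end EpiLemmas

/-! ### Capacitability over the Baire space -/

/-- A Borel function on a Polish space becomes continuous after pulling it back along a suitable
continuous surjection from the Baire space. -/
lemma exists_baire_parametrization {X : Type*} [TopologicalSpace X] [PolishSpace X] [Nonempty X]
    [MeasurableSpace X] [BorelSpace X] {f : X → ℝ≥0∞} (hf : Measurable f) :
    ∃ F : (ℕ → ℕ) → X, Continuous F ∧ Function.Surjective F ∧ Continuous fun σ => f (F σ) := by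
  obtain ⟨t', ht', hfc, hpol⟩ := hf.exists_continuous
  obtain ⟨F, hF, hFs⟩ := @PolishSpace.exists_nat_nat_continuous_surjective X t' hpol _
  exact ⟨F, continuous_le_rng ht' hF, hFs,
    @Continuous.comp _ _ _ _ t' _ _ _ hfc hF⟩

lemma isCompact_box (k : ℕ → ℕ) : IsCompact {σ : ℕ → ℕ | ∀ i, σ i ≤ k i} := by
  have : {σ : ℕ → ℕ | ∀ i, σ i ≤ k i} = Set.pi Set.univ fun i => Set.Iic (k i) := by
    ext σ; simp [Pi.le_def]
  rw [this]
  exact isCompact_univ_pi fun i => (Set.finite_Iic _).isCompact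

/-- Boxes of the Baire space shrinking to a compact box are eventually contained in any open
neighbourhood of the compact box. -/
lemma exists_box_subset {k : ℕ → ℕ} {U : Set (ℕ → ℕ)} (hU : IsOpen U)
    (hC : {σ : ℕ → ℕ | ∀ i, σ i ≤ k i} ⊆ U) : ∃ n, {σ : ℕ → ℕ | ∀ i < n, σ i ≤ k i} ⊆ U := by
  by_contra! hcon
  have hcon' : ∀ n, ∃ σ : ℕ → ℕ, (∀ i < n, σ i ≤ k i) ∧ σ ∉ U := fun n => by
    obtain ⟨σ, h1, h2⟩ := Set.not_subset.1 (hcon n)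
    exact ⟨σ, h1, h2⟩
  choose τ hτ hτU using hcon'
  have hcomp := isCompact_box k
  obtain ⟨σ, hσ, θ, hθ, hlim⟩ := hcomp.tendsto_subseq
    (x := fun n i => min (τ n i) (k i)) fun n i => min_le_right _ _
  have hlim' : Tendsto (fun n => τ (θ n)) atTop (nhds σ) := by
    rw [tendsto_pi_nhds] at hlim ⊢
    intro i
    refine (hlim i).congr' ?_
    filter_upwards [eventually_gt_atTop i] with n hn
    exact min_eq_left (hτ _ i (hn.trans_le (hθ.id_le n)))
  obtain ⟨n, hn⟩ := (hlim'.eventually (hU.mem_nhds (hC hσ))).exists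
  exact hτU _ hn

/-- Capacitability: if the inf-convolution exceeds `c` at a Borel function `f`, then there is an
upper semicontinuous `g ≤ f` such that the inf-convolution exceeds `c` at all continuous
functions strictly above `g`.  Parametrizing by the Baire space, `g` is the restriction of `f` to
the image of a compact box, chosen coordinate by coordinate by continuity from below. -/
lemma exists_usc_le_of_not_epi {Ω : Type*} [MetricSpace Ω] [MeasurableSpace Ω] [BorelSpace Ω]
    {φ : (Ω → ℝ≥0∞) → ℝ≥0∞} (H : FatouConvex φ) {K : Set Ω} (hK : IsCompact K) {N : ℝ≥0}
    {f : K → ℝ≥0∞} (hf : Measurable f) {c : ℝ≥0∞} (hfc : ¬ Epi φ K N f c) :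
    ∃ g : K → ℝ≥0∞, UpperSemicontinuous g ∧ (∀ x, g x ≤ f x) ∧
      ∀ u : K → ℝ≥0∞, Continuous u → (∀ x, g x < u x) → ¬ Epi φ K N u c := by
  classical
  have : CompactSpace K := isCompact_iff_compactSpace.1 hK
  have : Nonempty K := by
    by_contra hne
    rw [not_nonempty_iff] at hne
    exact hfc ⟨fun _ => 0, 0, measurable_const, fun x => isEmptyElim x, by simp [H.zero]⟩
  obtain ⟨F, hF, hFs, hfF⟩ := exists_baire_parametrization hf
  let w : Set (ℕ → ℕ) → K → ℝ≥0∞ := fun B => (F '' B).indicator f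
  have hstep : ∀ (B : {B : Set (ℕ → ℕ) // ¬ Epi φ K N (w B) c}) (n : ℕ),
      ∃ k : ℕ, ¬ Epi φ K N (w (B.1 ∩ {σ | σ n ≤ k})) c := by
    rintro ⟨B, hB⟩ n
    by_contra! hcon
    refine hB (Epi.of_tendsto H (fun x a b hab => ?_) (fun x => ?_) tendsto_const_nhds hcon)
    · refine Set.indicator_le_indicator_of_subset (Set.image_mono ?_) (fun _ => zero_le) x
      exact Set.inter_subset_inter_right _ fun σ hσ => le_trans hσ hab
    · by_cases hx : x ∈ F '' B
      · obtain ⟨σ, hσ, rfl⟩ := hx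
        refine le_trans (le_of_eq ?_) (le_iSup _ (σ n))
        simp only [w]
        rw [Set.indicator_of_mem (Set.mem_image_of_mem F hσ),
          Set.indicator_of_mem (Set.mem_image_of_mem F
            (show σ ∈ B ∩ {τ | τ n ≤ σ n} from ⟨hσ, le_refl (σ n)⟩))]
      · simp [w, Set.indicator_of_notMem hx]
  choose kk hkk using hstep
  have h0 : ¬ Epi φ K N (w Set.univ) c := by
    simpa [w, Set.image_univ, hFs.range_eq] using hfc
  let S : ℕ → {B : Set (ℕ → ℕ) // ¬ Epi φ K N (w B) c} := fun n =>
    Nat.rec ⟨Set.univ, h0⟩ (fun n B => ⟨_, hkk B n⟩) n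
  let k : ℕ → ℕ := fun n => kk (S n) n
  have hS : ∀ n, (S n).1 = {σ : ℕ → ℕ | ∀ i < n, σ i ≤ k i} := by
    intro n
    induction n with
    | zero => ext σ; simp [S]
    | succ n ih =>
      have : (S (n + 1)).1 = (S n).1 ∩ {σ | σ n ≤ k n} := rfl
      rw [this, ih]
      ext σ
      simp only [Set.mem_inter_iff, Set.mem_ofPred_eq, Nat.lt_succ_iff_lt_or_eq]
      grind
  have hcomp := isCompact_box k
  refine ⟨w {σ | ∀ i, σ i ≤ k i}, ?_, fun x => Set.indicator_le_self _ _ x, fun u hu hgu hepi => ?_⟩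
  · rw [upperSemicontinuous_iff_isClosed_preimage]
    intro y
    by_cases hy : y = 0
    · have : w {σ | ∀ i, σ i ≤ k i} ⁻¹' Set.Ici y = Set.univ := by ext; simp [hy]
      rw [this]
      exact isClosed_univ
    · have : w {σ | ∀ i, σ i ≤ k i} ⁻¹' Set.Ici y
          = F '' ({σ | ∀ i, σ i ≤ k i} ∩ {σ | y ≤ f (F σ)}) := by
        ext x
        constructor
        · intro hx
          by_cases hx' : x ∈ F '' {σ | ∀ i, σ i ≤ k i}
          · obtain ⟨σ, hσ, rfl⟩ := hx'
            refine ⟨σ, ⟨hσ, ?_⟩, rfl⟩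
            simpa [w, Set.indicator_of_mem (Set.mem_image_of_mem F hσ)] using hx
          · simp [w, Set.indicator_of_notMem hx', hy] at hx
        · rintro ⟨σ, ⟨hσ, hy'⟩, rfl⟩
          simpa [w, Set.indicator_of_mem (Set.mem_image_of_mem F hσ)] using hy'
      rw [this]
      exact ((hcomp.inter_right (isClosed_le continuous_const hfF)).image hF).isClosed
  · obtain ⟨n, hn⟩ := exists_box_subset (k := k) (isOpen_lt hfF (hu.comp hF)) fun σ hσ => by
      have := hgu (F σ)
      simp only [w] at this
      rw [Set.indicator_of_mem (Set.mem_image_of_mem F hσ)] at this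
      exact this
    refine (S n).2 (hepi.mono (fun x => ?_) le_rfl)
    by_cases hx : x ∈ F '' (S n).1
    · obtain ⟨σ, hσ, rfl⟩ := hx
      simp only [w]
      rw [Set.indicator_of_mem (Set.mem_image_of_mem F hσ)]
      rw [hS] at hσ
      exact (hn hσ).le
    · simp [w, Set.indicator_of_notMem hx]

/-! ### Separation, approximation and regularity -/

/-- Hahn–Banach and Riesz–Markov–Kakutani: a convex continuous functional on `C(X)` that is at
least `c` on a convex set `D` admits an affine minorant `u ↦ ∫ u dμ - β` that is itself at least
`c` on `D`.  Nonpositivity of the functional on nonpositive functions makes `μ` positive. -/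
lemma exists_measure_separating {X : Type*} [TopologicalSpace X] [CompactSpace X] [T2Space X]
    [MeasurableSpace X] [BorelSpace X] {Ψ : C(X, ℝ) → ℝ} (hΨ : ConvexOn ℝ Set.univ Ψ)
    (hΨc : Continuous Ψ) (hΨ0 : ∀ u ≤ 0, Ψ u ≤ 0) {D : Set C(X, ℝ)} (hD : Convex ℝ D)
    (hDne : D.Nonempty) {c : ℝ} (hc : ∀ v ∈ D, c ≤ Ψ v) :
    ∃ (μ : Measure X) (β : ℝ), IsFiniteMeasure μ ∧ 0 ≤ β ∧ (∀ u, ∫ x, u x ∂μ ≤ Ψ u + β) ∧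
      ∀ v ∈ D, β + c ≤ ∫ x, v x ∂μ := by
  obtain ⟨L, β₀, hA, hB⟩ := geometric_hahn_banach_open (E := C(X, ℝ) × ℝ)
    (s := {p | p.1 ∈ Set.univ ∧ Ψ p.1 < p.2}) (t := D ×ˢ Set.Iic c) hΨ.convex_strict_epigraph
    (by simpa using isOpen_lt (hΨc.comp continuous_fst) continuous_snd)
    (hD.prod (convex_Iic c)) (Set.disjoint_left.2 fun p h1 h2 =>
      (h1.2.trans_le (h2.2.trans (hc _ h2.1))).false)
  set α : ℝ := L (0, 1) with hα
  have hL : ∀ u r, L (u, r) = L (u, 0) + r * α := fun u r => by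
    have : ((u, r) : C(X, ℝ) × ℝ) = (u, 0) + r • (0, 1) := by ext <;> simp
    rw [this, map_add, map_smul, smul_eq_mul]
  have hα0 : α < 0 := by
    obtain ⟨v, hv⟩ := hDne
    have h1 := hA (v, Ψ v + 1) ⟨trivial, by simp⟩
    have h2 := hB (v, c) ⟨hv, Set.self_mem_Iic⟩
    rw [hL] at h1 h2
    nlinarith [hc v hv]
  have hα0' : 0 < -α := neg_pos.2 hα0
  let l : C(X, ℝ) →ₗ[ℝ] ℝ := (-α)⁻¹ • (L.toLinearMap ∘ₗ LinearMap.inl ℝ C(X, ℝ) ℝ)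
  have hl : ∀ u, L (u, 0) = (-α) * l u := fun u => by
    simp only [l, LinearMap.smul_apply, smul_eq_mul, LinearMap.comp_apply, LinearMap.inl_apply]
    rw [mul_inv_cancel_left₀ hα0'.ne']
    rfl
  have hA' : ∀ u, l u ≤ Ψ u + β₀ / (-α) := fun u => by
    refine le_of_forall_pos_le_add fun ε hε => ?_
    have h1 := hA (u, Ψ u + ε) ⟨trivial, by simpa using hε⟩
    rw [hL, hl] at h1
    have : l u - (Ψ u + ε) < β₀ / (-α) := by
      rw [lt_div_iff₀ hα0']
      linarith
    linarith
  have hB' : ∀ v ∈ D, β₀ / (-α) + c ≤ l v := fun v hv => by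
    have h1 := hB (v, c) ⟨hv, Set.self_mem_Iic⟩
    rw [hL, hl] at h1
    have : β₀ / (-α) ≤ l v - c := by
      rw [div_le_iff₀ hα0']
      linarith
    linarith
  have hβ : 0 ≤ β₀ / (-α) := by
    have := hA' 0
    rw [map_zero] at this
    linarith [hΨ0 0 le_rfl]
  generalize β₀ / (-α) = β at *
  have hpos : ∀ u : C(X, ℝ), 0 ≤ u → 0 ≤ l u := fun u hu => by
    by_contra! hneg
    have ht : 0 ≤ (β + 1) / (-l u) := div_nonneg (by linarith) (by linarith)
    have h1 := hA' (-(((β + 1) / (-l u)) • u))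
    have h2 := hΨ0 (-(((β + 1) / (-l u)) • u)) (neg_nonpos.2 (smul_nonneg ht hu))
    rw [map_neg, map_smul, smul_eq_mul] at h1
    have h3 : -((β + 1) / (-l u) * l u) = β + 1 := by
      field_simp [hneg.ne]
    linarith
  let l' : CompactlySupportedContinuousMap X ℝ →ₗ[ℝ] ℝ :=
    { toFun := fun u => l u.toContinuousMap
      map_add' := fun u v => l.map_add u.toContinuousMap v.toContinuousMap
      map_smul' := fun a u => l.map_smul a u.toContinuousMap }
  let Λ : CompactlySupportedContinuousMap X ℝ →ₚ[ℝ] ℝ :=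
    PositiveLinearMap.mk₀ l' fun u hu => hpos _ hu
  have hΛint : ∀ u : C(X, ℝ), ∫ x, u x ∂(RealRMK.rieszMeasure Λ) = l u := fun u =>
    RealRMK.integral_rieszMeasure Λ (CompactlySupportedContinuousMap.continuousMapEquiv u)
  exact ⟨RealRMK.rieszMeasure Λ, β, inferInstance, hβ, fun u => by rw [hΛint]; exact hA' u,
    fun v hv => by rw [hΛint]; exact hB' v hv⟩

/-- An upper semicontinuous function can be approximated strictly from above, in the mean, by
continuous functions: squeeze one below a lower semicontinuous majorant. -/
lemma exists_continuous_gt_lintegral_le {X : Type*} [MetricSpace X] [MeasurableSpace X]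
    [BorelSpace X] (μ : Measure X) [IsFiniteMeasure μ] {g : X → ℝ≥0∞}
    (hg : UpperSemicontinuous g) (hgt : ∀ x, g x ≠ ∞) {ε : ℝ≥0∞} (hε : ε ≠ 0) :
    ∃ v : C(X, ℝ), (∀ x, g x < ENNReal.ofReal (v x)) ∧
      ∫⁻ x, ENNReal.ofReal (v x) ∂μ ≤ ∫⁻ x, g x ∂μ + ε := by
  obtain ⟨G, hgG, hG, hGi⟩ := exists_lt_lowerSemicontinuous_lintegral_ge μ
    (fun x => (g x).toNNReal) hg.measurable.ennreal_toNNReal hε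
  simp only [coe_toNNReal (hgt _)] at hgG hGi
  obtain ⟨v, hv⟩ := exists_continuous_forall_mem_convex_of_local_const (X := X) (E := ℝ)
    (t := fun x => {r | g x < ENNReal.ofReal r ∧ ENNReal.ofReal r < G x}) (fun x => by
      refine Set.OrdConnected.convex ⟨fun a ha b hb r hr => ?_⟩
      exact ⟨ha.1.trans_le (ENNReal.ofReal_le_ofReal hr.1),
        (ENNReal.ofReal_le_ofReal hr.2).trans_lt hb.2⟩) (fun x => by
      obtain ⟨r, hr1, hr2⟩ := ENNReal.lt_iff_exists_nnreal_btwn.1 (hgG x)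
      refine ⟨r, ?_⟩
      filter_upwards [hg x _ hr1, hG x _ hr2] with y h1 h2
      exact ⟨by simpa using h1, by simpa using h2⟩)
  exact ⟨v, fun x => (hv x).1, (lintegral_mono fun x => (hv x).2.le).trans hGi⟩

/-- Regularity of the level sets means that the conjugate of `φ` at `μ` is already computed on
`C_b`: by inner approximation it is computed on `U_b`, and regularity compares the two. -/
lemma lintegral_le_of_isCb {Ω : Type*} [MetricSpace Ω] [MeasurableSpace Ω] [BorelSpace Ω]
    {φ : (Ω → ℝ≥0∞) → ℝ≥0∞} (H : FatouConvex φ)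
    (hreg : ∀ c : ℝ, RegularSet {f : Ω → ℝ≥0∞ | Measurable f ∧ φ f ≤ ENNReal.ofReal c})
    (μ : Measure Ω) [IsFiniteMeasure μ] {β : ℝ≥0∞}
    (hCb : ∀ h, IsCb h → ∫⁻ x, h x ∂μ ≤ φ h + β) {g : Ω → ℝ≥0∞} (hg : Measurable g) :
    ∫⁻ x, g x ∂μ ≤ φ g + β := by
  by_cases htop : φ g = ∞
  · simp [htop]
  have hlev := hreg (φ g).toReal μ inferInstance
  rw [ENNReal.ofReal_toReal htop] at hlev
  have hUb : ∀ h, Measurable h → φ h ≤ φ g → IsUb h → ∫⁻ x, h x ∂μ ≤ φ g + β := by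
    intro h hm hle hub
    refine le_trans ?_ (hlev.le.trans (sSup_le ?_))
    · exact le_sSup ⟨h, ⟨hm, hle⟩, hub, rfl⟩
    rintro _ ⟨h', ⟨-, hle'⟩, hcb, rfl⟩
    exact (hCb h' hcb).trans (by gcongr)
  have htrunc : ∀ n : ℕ, ∫⁻ x, min (g x) n ∂μ ≤ φ g + β := by
    intro n
    refine ENNReal.le_of_forall_pos_le_add fun ε hε _ => ?_
    have hne : ∀ x, min (g x) (n : ℝ≥0∞) ≠ ∞ := fun x =>
      ((min_le_right _ _).trans_lt (natCast_lt_top n)).ne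
    obtain ⟨u, hu1, hu2, hu3⟩ := exists_upperSemicontinuous_le_lintegral_le (μ := μ)
      (fun x => (min (g x) (n : ℝ≥0∞)).toNNReal) (by
        simp only [coe_toNNReal (hne _)]
        refine ((lintegral_mono fun x => min_le_right (g x) (n : ℝ≥0∞)).trans_lt ?_).ne
        rw [lintegral_const]
        exact ENNReal.mul_lt_top (natCast_lt_top n) (measure_lt_top _ _))
      (ε := ε) (by simpa using hε.ne')
    simp only [coe_toNNReal (hne _)] at hu3
    have hu1' : ∀ x, (u x : ℝ≥0∞) ≤ min (g x) n := fun x => by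
      rw [← coe_toNNReal (hne x)]
      exact coe_le_coe.2 (hu1 x)
    have hum : Measurable fun x => (u x : ℝ≥0∞) := hu2.measurable.coe_nnreal_ennreal
    refine hu3.trans ?_
    gcongr
    refine hUb _ hum (H.incr _ _ hum hg fun x => (hu1' x).trans (min_le_left _ _))
      ⟨?_, n, fun x => (hu1' x).trans (by simp)⟩
    exact ENNReal.continuous_coe.comp_upperSemicontinuous hu2 ENNReal.coe_mono
  have hsup : ∀ x, g x = ⨆ n : ℕ, min (g x) (n : ℝ≥0∞) := fun x => by
    rw [← inf_iSup_eq, ENNReal.iSup_natCast]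
    simp
  calc ∫⁻ x, g x ∂μ = ∫⁻ x, ⨆ n : ℕ, min (g x) (n : ℝ≥0∞) ∂μ := by simp_rw [← hsup]
    _ = ⨆ n : ℕ, ∫⁻ x, min (g x) (n : ℝ≥0∞) ∂μ := by
        refine lintegral_iSup (fun n => hg.min measurable_const) fun a b hab x => ?_
        exact min_le_min le_rfl (by exact_mod_cast hab)
    _ ≤ _ := iSup_le htrunc

/-! ### Duality -/

/-- The dual measures: for every `c < φ f` there is a finite measure `μ` with
`c ≤ ⟨f,μ⟩ - φ*(μ)`; the constant `β` is an upper bound for `φ*(μ)`. -/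
lemma exists_measure_of_lt {Ω : Type*} [MetricSpace Ω] [SigmaCompactSpace Ω] [MeasurableSpace Ω]
    [BorelSpace Ω] {φ : (Ω → ℝ≥0∞) → ℝ≥0∞} (H : FatouConvex φ)
    (hreg : ∀ c : ℝ, RegularSet {f : Ω → ℝ≥0∞ | Measurable f ∧ φ f ≤ ENNReal.ofReal c})
    {f : Ω → ℝ≥0∞} (hf : Measurable f) {c : ℝ≥0} (hc : c < φ f) :
    ∃ (μ : Measure Ω) (β : ℝ≥0), IsFiniteMeasure μ ∧
      (∀ g : Ω → ℝ≥0∞, Measurable g → ∫⁻ x, g x ∂μ ≤ φ g + β) ∧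
      (c + β : ℝ≥0∞) ≤ ∫⁻ x, f x ∂μ := by
  classical
  -- Truncations of `f` on compact sets increase to `f`, so one of them has value above `c`.
  let fn : ℕ → Ω → ℝ≥0∞ := fun n => (compactCovering Ω n).indicator fun x => min (f x) n
  have hKm : ∀ n, MeasurableSet (compactCovering Ω n) := fun n =>
    (isCompact_compactCovering Ω n).measurableSet
  have hfn : ∀ n, Measurable (fn n) := fun n => (hf.min measurable_const).indicator (hKm n)
  have hfnf : ∀ n x, fn n x ≤ f x := fun n x =>
    (Set.indicator_le_self _ _ x).trans (min_le_left _ _)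
  have hlim : ∀ x, Tendsto (fun n => fn n x) atTop (nhds (f x)) := fun x => by
    have h1 : Tendsto (fun n : ℕ => min (f x) (n : ℝ≥0∞)) atTop (nhds (min (f x) ∞)) :=
      tendsto_const_nhds.min tendsto_nat_nhds_top
    rw [min_eq_left le_top] at h1
    refine h1.congr' ?_
    obtain ⟨m, hm⟩ := exists_mem_compactCovering x
    filter_upwards [eventually_ge_atTop m] with n hn
    exact (Set.indicator_of_mem (compactCovering_subset Ω hn hm)
      fun x => min (f x) (n : ℝ≥0∞)).symm
  obtain ⟨n, hn⟩ : ∃ n, c < φ (fn n) := by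
    by_contra! hcon
    refine hc.not_ge ((H.fatou fn f hfn hf hlim).trans ?_)
    refine (liminf_le_liminf (v := fun _ => (c : ℝ≥0∞)) (Eventually.of_forall hcon)).trans ?_
    simp
  set K := compactCovering Ω n with hKdef
  have hK : IsCompact K := isCompact_compactCovering Ω n
  have : CompactSpace K := isCompact_iff_compactSpace.1 hK
  obtain ⟨N, hN⟩ : ∃ N : ℕ, ¬ Epi φ K N (fun x => fn n x) c := by
    by_contra! hcon
    exact hn.not_ge (le_of_forall_epi H (hfn n)
      (fun x hx => Set.indicator_of_notMem hx _) hcon)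
  obtain ⟨g, hg, hgf, hgu⟩ :=
    exists_usc_le_of_not_epi H hK ((hfn n).comp measurable_subtype_coe) hN
  have hgtop : ∀ x, g x ≠ ∞ := fun x => by
    have h1 : fn n x ≤ min (f x) n := Set.indicator_le_self _ _ _
    exact ((hgf x).trans (h1.trans (min_le_right _ _))).trans_lt (natCast_lt_top n) |>.ne
  -- The inf-convolution restricts to a finite convex Lipschitz functional `Ψ` on `C(K)`.
  let w : C(K, ℝ) → K → ℝ≥0∞ := fun u x => ENNReal.ofReal (u x)
  have hfin : ∀ u, infConv φ K N (w u) ≠ ∞ := fun u => by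
    refine (((infConv_le_iff H).2 ((Epi.const H (ENNReal.ofReal ‖u‖)).mono (fun x => ?_)
      le_rfl)).trans_lt (ENNReal.mul_lt_top (by simp) ofReal_lt_top)).ne
    exact ENNReal.ofReal_le_ofReal ((le_abs_self _).trans (u.norm_coe_le_norm x))
  have hepi : ∀ u, Epi φ K N (w u) (infConv φ K N (w u)) := fun u => (infConv_le_iff H).1 le_rfl
  let Ψ : C(K, ℝ) → ℝ := fun u => (infConv φ K N (w u)).toReal
  have hΨc : Continuous Ψ := by
    refine (LipschitzWith.of_le_add_mul (f := Ψ) (N : ℝ≥0) fun u v => ?_).continuous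
    have h1 := (infConv_le_iff H).2 ((hepi v).add_const (w' := w u)
      (δ := ENNReal.ofReal (dist u v)) fun x => by
        refine (ENNReal.ofReal_le_ofReal ?_).trans ENNReal.ofReal_add_le
        have h2 := (abs_le.1 (ContinuousMap.dist_apply_le_dist (f := u) (g := v) x)).2
        linarith)
    have h3 := ENNReal.toReal_mono (ENNReal.add_ne_top.2
      ⟨hfin v, ENNReal.mul_ne_top coe_ne_top ofReal_ne_top⟩) h1
    rw [ENNReal.toReal_add (hfin v) (ENNReal.mul_ne_top coe_ne_top ofReal_ne_top),
      ENNReal.toReal_mul, ENNReal.toReal_ofReal dist_nonneg] at h3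
    exact h3
  have hΨconv : ConvexOn ℝ Set.univ Ψ := by
    refine ⟨convex_univ, fun u _ v _ a b ha hb hab => ?_⟩
    have hb' : ENNReal.ofReal b = 1 - ENNReal.ofReal a := by
      rw [← ENNReal.ofReal_one, ← ENNReal.ofReal_sub _ ha]
      congr 1
      linarith
    have h1 := (infConv_le_iff H).2 (((hepi u).convex H (hepi v) (ENNReal.ofReal a)
      (by simpa using by linarith)).mono (w' := w (a • u + b • v)) (fun x => by
        simp only [w, ContinuousMap.add_apply, ContinuousMap.smul_apply, smul_eq_mul]
        rw [← hb', ← ENNReal.ofReal_mul ha, ← ENNReal.ofReal_mul hb]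
        exact ENNReal.ofReal_add_le) le_rfl)
    rw [← hb'] at h1
    have h2 := ENNReal.toReal_mono (ENNReal.add_ne_top.2
      ⟨ENNReal.mul_ne_top ofReal_ne_top (hfin u), ENNReal.mul_ne_top ofReal_ne_top (hfin v)⟩) h1
    rw [ENNReal.toReal_add (ENNReal.mul_ne_top ofReal_ne_top (hfin u))
      (ENNReal.mul_ne_top ofReal_ne_top (hfin v)), ENNReal.toReal_mul, ENNReal.toReal_mul,
      ENNReal.toReal_ofReal ha, ENNReal.toReal_ofReal hb] at h2
    exact h2
  have hΨle : ∀ u (h : Ω → ℝ≥0∞), Measurable h → φ h ≠ ∞ → (∀ x : K, w u x ≤ h x) →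
      Ψ u ≤ (φ h).toReal := fun u h hm ht hle =>
    ENNReal.toReal_mono ht ((infConv_le_iff H).2 ⟨h, 0, hm, by simpa using hle, by simp⟩)
  have hΨ0 : ∀ u ≤ 0, Ψ u ≤ 0 := fun u hu => by
    simpa [H.zero] using hΨle u (fun _ => 0) measurable_const (by simp [H.zero])
      fun x => by simpa [w] using hu x
  let D : Set C(K, ℝ) := {v | ∀ x, g x < ENNReal.ofReal (v x)}
  have hpos : ∀ v ∈ D, ∀ x, 0 < v x := fun v hv x =>
    ENNReal.ofReal_pos.1 (zero_le.trans_lt (hv x))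
  have hD : Convex ℝ D := by
    intro u hu v hv a b ha hb hab x
    have h1 : Convex ℝ {r : ℝ | g x < ENNReal.ofReal r} :=
      Set.OrdConnected.convex ⟨fun a ha b hb r hr => ha.trans_le (ENNReal.ofReal_le_ofReal hr.1)⟩
    exact h1 (hu x) (hv x) ha hb hab
  have hcD : ∀ v ∈ D, (c : ℝ) ≤ Ψ v := fun v hv => by
    have h1 : ¬ infConv φ K N (w v) ≤ c := fun hle =>
      hgu (w v) (ENNReal.continuous_ofReal.comp v.continuous) hv ((infConv_le_iff H).1 hle)
    exact ENNReal.toReal_mono (hfin v) (not_le.1 h1).le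
  have hDne : D.Nonempty := by
    obtain ⟨v, hv, -⟩ := exists_continuous_gt_lintegral_le (0 : Measure K) hg hgtop one_ne_zero
    exact ⟨v, hv⟩
  obtain ⟨ν, β, hν, hβ, h1, h2⟩ := exists_measure_separating hΨconv hΨc hΨ0 hD hDne hcD
  have hval : Measurable (Subtype.val : K → Ω) := measurable_subtype_coe
  have hβ' : ((β.toNNReal : ℝ≥0) : ℝ≥0∞) = ENNReal.ofReal β := rfl
  refine ⟨ν.map Subtype.val, β.toNNReal, inferInstance, fun h hm => ?_, ?_⟩
  · refine lintegral_le_of_isCb H hreg _ (fun h hcb => ?_) hm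
    by_cases htop : φ h = ∞
    · simp [htop]
    obtain ⟨hcont, C, hC⟩ := hcb
    have hht : ∀ x, h x ≠ ∞ := fun x => ((hC x).trans_lt coe_lt_top).ne
    let u : C(K, ℝ) := ⟨fun x => (h x).toReal, by
      refine continuous_iff_continuousAt.2 fun x => ?_
      exact (ENNReal.tendsto_toReal (hht x)).comp
        (hcont.comp continuous_subtype_val).continuousAt⟩
    have hwu : ∀ x : K, w u x = h x := fun x => ENNReal.ofReal_toReal (hht x)
    have h3 := h1 u
    have h4 := hΨle u h hcont.measurable htop fun x => (hwu x).le
    rw [lintegral_map hcont.measurable hval, hβ']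
    calc ∫⁻ x : K, h x ∂ν = ∫⁻ x : K, ENNReal.ofReal (u x) ∂ν := by
          simp_rw [← hwu]; rfl
      _ = ENNReal.ofReal (∫ x, u x ∂ν) := by
          rw [ofReal_integral_eq_lintegral_ofReal]
          · exact u.continuous.integrable_of_hasCompactSupport (HasCompactSupport.of_compactSpace _)
          · exact Eventually.of_forall fun x => toReal_nonneg
      _ ≤ ENNReal.ofReal ((φ h).toReal + β) := ENNReal.ofReal_le_ofReal (by linarith)
      _ = φ h + ENNReal.ofReal β := by
          rw [ENNReal.ofReal_add toReal_nonneg hβ, ENNReal.ofReal_toReal htop]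
  · have h3 : (c + ENNReal.ofReal β : ℝ≥0∞) ≤ ∫⁻ x, g x ∂ν := by
      refine ENNReal.le_of_forall_pos_le_add fun ε hε _ => ?_
      obtain ⟨v, hv, hvi⟩ := exists_continuous_gt_lintegral_le ν hg hgtop
        (ε := ε) (by simpa using hε.ne')
      refine le_trans ?_ hvi
      rw [← ofReal_integral_eq_lintegral_ofReal]
      · rw [← ENNReal.ofReal_coe_nnreal, ← ENNReal.ofReal_add c.coe_nonneg hβ]
        refine ENNReal.ofReal_le_ofReal ?_
        have := h2 v hv
        linarith
      · exact v.continuous.integrable_of_hasCompactSupport (HasCompactSupport.of_compactSpace _)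
      · exact Eventually.of_forall fun x => (hpos v hv x).le
    rw [lintegral_map hf hval, hβ']
    exact h3.trans (lintegral_mono fun x => (hgf x).trans (hfnf n x))

/-- Comparison with the conjugate in `EReal`: since `φ 0 = 0`, the conjugate is nonnegative, so it
is either `⊤`, where the difference is `⊥`, or an extended nonnegative number `b`. -/
lemma sub_conj_le {Ω : Type*} [MeasurableSpace Ω] {φ : (Ω → ℝ≥0∞) → ℝ≥0∞}
    (h0 : φ (fun _ => 0) = 0) (μ : Measure Ω) {I a : ℝ≥0∞}
    (h : ∀ b : ℝ≥0∞, (∀ g : Ω → ℝ≥0∞, Measurable g → ∫⁻ x, g x ∂μ ≤ φ g + b) → I ≤ a + b) :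
    (I : EReal) - sSup {y : EReal | ∃ g : Ω → ℝ≥0∞, Measurable g ∧
      y = ((∫⁻ ω, g ω ∂μ : ℝ≥0∞) : EReal) - (φ g : EReal)} ≤ a := by
  set C : EReal := sSup {y : EReal | ∃ g : Ω → ℝ≥0∞, Measurable g ∧
      y = ((∫⁻ ω, g ω ∂μ : ℝ≥0∞) : EReal) - (φ g : EReal)} with hC
  have hmem : ∀ g : Ω → ℝ≥0∞, Measurable g →
      ((∫⁻ ω, g ω ∂μ : ℝ≥0∞) : EReal) - (φ g : EReal) ≤ C := fun g hg => le_sSup ⟨g, hg, rfl⟩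
  have hC0 : 0 ≤ C := by simpa [h0] using hmem (fun _ => 0) measurable_const
  lift C to ℝ≥0∞ using hC0 with b
  have hbot : ∀ x : ℝ≥0∞, (x : EReal) ≠ ⊥ := EReal.coe_ennreal_ne_bot
  by_cases hb : b = ∞
  · simp [hb]
  rw [EReal.sub_le_iff_le_add (Or.inl (hbot _)) (Or.inr (hbot _)), ← EReal.coe_ennreal_add,
    EReal.coe_ennreal_le_coe_ennreal_iff]
  refine h b fun g hg => ?_
  have h1 := hmem g hg
  rw [EReal.sub_le_iff_le_add (Or.inl (hbot _)) (Or.inr (hbot _)), ← EReal.coe_ennreal_add,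
    EReal.coe_ennreal_le_coe_ennreal_iff] at h1
  rwa [add_comm]

/-- **Corollary 1.3** in Bartl–Kupper, "A pointwise bipolar theorem": let `φ` be a convex
increasing functional on the Borel measurable functions `Ω → [0,∞]` whose level sets
`{φ ≤ c}`, `c ∈ ℝ`, are nonempty and regular.  With
`φ*(μ) := sup_{f ∈ L⁰₊} (⟨f,μ⟩ − φ(f))` (convention `+∞ − ∞ := −∞`, which is the `EReal`
convention `⊤ + ⊥ = ⊥`), the duality
`φ(f) = sup_{μ ∈ ca₊} (⟨f,μ⟩ − φ*(μ))` holds for all `f ∈ L⁰₊` if and only if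
`φ(f) ≤ liminf_n φ(f_n)` for every sequence `(f_n)` in `L⁰₊` converging pointwise to some
`f ∈ L⁰₊`. -/
theorem functional_bipolar
    {Ω : Type*} [MetricSpace Ω] [SigmaCompactSpace Ω]
    [MeasurableSpace Ω] [BorelSpace Ω]
    (φ : (Ω → ℝ≥0∞) → ℝ≥0∞)
    (hconv : ∀ f g : Ω → ℝ≥0∞, Measurable f → Measurable g → ∀ t : ℝ≥0∞, t ≤ 1 →
      φ (fun x => t * f x + (1 - t) * g x) ≤ t * φ f + (1 - t) * φ g)
    (hincr : ∀ f g : Ω → ℝ≥0∞, Measurable f → Measurable g →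
      (∀ x, f x ≤ g x) → φ f ≤ φ g)
    (hlevel : ∀ c : ℝ,
      {f : Ω → ℝ≥0∞ | Measurable f ∧ φ f ≤ ENNReal.ofReal c}.Nonempty ∧
      RegularSet {f : Ω → ℝ≥0∞ | Measurable f ∧ φ f ≤ ENNReal.ofReal c}) :
    (∀ f : Ω → ℝ≥0∞, Measurable f →
        (φ f : EReal) =
          sSup {x : EReal | ∃ μ : Measure Ω, IsFiniteMeasure μ ∧
            x = ((∫⁻ ω, f ω ∂μ : ℝ≥0∞) : EReal) -
              sSup {y : EReal | ∃ g : Ω → ℝ≥0∞, Measurable g ∧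
                y = ((∫⁻ ω, g ω ∂μ : ℝ≥0∞) : EReal) - (φ g : EReal)}}) ↔
      (∀ (fn : ℕ → Ω → ℝ≥0∞) (f : Ω → ℝ≥0∞), (∀ n, Measurable (fn n)) → Measurable f →
        (∀ x, Tendsto (fun n => fn n x) atTop (nhds (f x))) →
        φ f ≤ liminf (fun n => φ (fn n)) atTop) := by
  have h0 : φ (fun _ => 0) = 0 := by
    obtain ⟨f, hf, hle⟩ := (hlevel 0).1
    refine le_antisymm ((hincr _ f measurable_const hf fun _ => zero_le).trans ?_) zero_le
    simpa using hle
  constructor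
  · intro hd fn f hfn hf hlim
    rw [← EReal.coe_ennreal_le_coe_ennreal_iff, hd f hf]
    refine sSup_le ?_
    rintro _ ⟨μ, hμ, rfl⟩
    refine sub_conj_le h0 μ fun b hb => ?_
    calc ∫⁻ x, f x ∂μ = ∫⁻ x, liminf (fun n => fn n x) atTop ∂μ := by
          simp_rw [fun x => (hlim x).liminf_eq]
      _ ≤ liminf (fun n => ∫⁻ x, fn n x ∂μ) atTop := lintegral_liminf_le hfn
      _ ≤ liminf (fun n => φ (fn n) + b) atTop :=
          liminf_le_liminf (Eventually.of_forall fun n => hb _ (hfn n))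
      _ = liminf (fun n => φ (fn n)) atTop + b :=
          liminf_add_const atTop _ b (by isBoundedDefault) (by isBoundedDefault)
  · intro hfatou f hf
    have H : FatouConvex φ := ⟨hconv, hincr, h0, hfatou⟩
    refine le_antisymm ?_ (sSup_le ?_)
    · refine le_of_forall_lt_imp_le_of_dense fun y hy => ?_
      rcases lt_or_ge y 0 with hy0 | hy0
      · refine le_sSup_of_le ⟨0, inferInstance, rfl⟩ (hy0.le.trans ?_)
        simp only [lintegral_zero_measure, EReal.coe_ennreal_zero]
        rw [zero_sub, EReal.le_neg, neg_zero]
        refine sSup_le ?_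
        rintro _ ⟨g, -, rfl⟩
        simp [EReal.coe_ennreal_nonneg]
      · lift y to ℝ≥0∞ using hy0
        rw [EReal.coe_ennreal_lt_coe_ennreal_iff] at hy
        lift y to ℝ≥0 using (hy.trans_le le_top).ne
        obtain ⟨μ, β, hμ, h1, h2⟩ := exists_measure_of_lt H (fun c => (hlevel c).2) hf hy
        refine le_sSup_of_le ⟨μ, hμ, rfl⟩ ?_
        have hC : sSup {y : EReal | ∃ g : Ω → ℝ≥0∞, Measurable g ∧
            y = ((∫⁻ ω, g ω ∂μ : ℝ≥0∞) : EReal) - (φ g : EReal)} ≤ ((β : ℝ≥0∞) : EReal) := by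
          refine sSup_le ?_
          rintro _ ⟨g, hg, rfl⟩
          rw [EReal.sub_le_iff_le_add (Or.inl (EReal.coe_ennreal_ne_bot _))
            (Or.inr (EReal.coe_ennreal_ne_bot _)), ← EReal.coe_ennreal_add,
            EReal.coe_ennreal_le_coe_ennreal_iff, add_comm]
          exact h1 g hg
        refine le_trans ?_ (EReal.sub_le_sub le_rfl hC)
        rw [EReal.le_sub_iff_add_le (Or.inl (EReal.coe_ennreal_ne_bot _))
          (Or.inl (by simp)), ← EReal.coe_ennreal_add, EReal.coe_ennreal_le_coe_ennreal_iff]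
        exact h2
    · rintro _ ⟨μ, hμ, rfl⟩
      exact sub_conj_le h0 μ fun b hb => hb f hf
end

section
/- Let H be a monotone, normalized, regular, tight subset of L⁰_{b-}. Then H = H°° if and only if H is convex and closed under liminf. -/
/-!
The bipolar `H°°` is always convex and closed under `liminf` (the latter by Fatou's lemma), so the
content is the inclusion `H°° ⊆ H` for `H` convex and closed under `liminf`. Suppose `f ∈ H°°` is
not in `H`.

* Closedness under `liminf` makes domination by an element of `H` stable under pointwise
  limits bounded from below. Hence `f` has a bounded Borel minorant `g` such that `g - a` is still
  not dominated by an element of `H`, for some `a > 0` (`exists_truncation_not_dominated`).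
* A capacitability argument in the style of Choquet replaces `g` by bounded continuous functions:
  the hypograph of `g` is a projection of a closed subset of `(Ω × ℝ) × (ℕ → ℕ)`, and restricting
  the Baire space coordinate successively to a compact product yields a decreasing sequence of
  continuous functions `u n` whose limit is at most `g` and such that no `u n - a` is dominated by
  an element of `H` (`exists_antitone_continuous_of_not`). Separability or completeness of `Ω` is
  not needed.
* Hahn–Banach in the space of bounded continuous functions separates the functions above some
  `u n - w`, `w ∈ H` bounded continuous, from the functions strictly below `a`. The separating
  functional is positive, and tightness of `H` makes it tight, hence integration against a
  probability measure `μ` (`exists_measure_of_tight`, obtained from the Riesz representation theorem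
  on the Stone–Čech compactification). Dominated convergence then gives
  `∫ w dμ + a ≤ ∫ g dμ` for all bounded continuous `w ∈ H`.
* Regularity carries the bound `⟨w, μ⟩ ≤ ∫ g dμ - a` over to the bounded upper semicontinuous
  elements of `H`, and the approximation of Borel functions from below by upper semicontinuous ones
  (Vitali–Carathéodory) to all of `H` (`ePair_le_of_forall_bounded_continuous`). A rescaling of `μ`
  then lies in `H°` and contradicts `f ∈ H°°`.
-/

open MeasureTheory Filter ENNReal NNReal

/-- Positive part of an extended real number, as an element of `[0,∞]`. -/
noncomputable def ERealPosPart (x : EReal) : ℝ≥0∞ :=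
  if x = ⊤ then ⊤ else ENNReal.ofReal x.toReal

section Defs

variable {Ω : Type*} [TopologicalSpace Ω] [MeasurableSpace Ω]

/-- The pairing `⟨f,μ⟩ = ∫ f dμ` for an extended-real-valued function `f`; for `f` bounded
from below and `μ` a finite measure this is the usual (extended-valued) integral. -/
noncomputable def ePair (f : Ω → EReal) (μ : Measure Ω) : EReal :=
  ((∫⁻ x, ERealPosPart (f x) ∂μ : ℝ≥0∞) : EReal) -
    ((∫⁻ x, ERealPosPart (-f x) ∂μ : ℝ≥0∞) : EReal)

/-- `L⁰_{b-}`: the set of Borel measurable functions `Ω → ℝ ∪ {+∞}` which are bounded from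
below (modelled as `EReal`-valued functions bounded below by a real constant). -/
def L0b : Set (Ω → EReal) :=
  {f | Measurable f ∧ ∃ c : ℝ, ∀ x, (c : EReal) ≤ f x}

/-- `H ⊆ L⁰_{b-}` is monotone: `f ∈ H` whenever `f ∈ L⁰_{b-}` satisfies `f ≤ h` for some
`h ∈ H`. -/
def MonotoneB (H : Set (Ω → EReal)) : Prop :=
  ∀ f ∈ L0b, (∃ h ∈ H, ∀ x, f x ≤ h x) → f ∈ H

/-- `H` is normalized: the constant function `0` belongs to `H` and no constant
function `ε > 0` belongs to `H`. -/
def NormalizedB (H : Set (Ω → EReal)) : Prop :=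
  (fun _ => (0 : EReal)) ∈ H ∧ ∀ ε : ℝ, 0 < ε → (fun _ => (ε : EReal)) ∉ H

/-- `H` is tight: for every constant `m ∈ ℝ` with `m ∈ H`, every `n ∈ ℕ` and `ε > 0` there
is a compact `K ⊆ Ω` with `m − ε + n·1_{Kᶜ} ∈ H`. -/
def TightB (H : Set (Ω → EReal)) : Prop :=
  ∀ m : ℝ, (fun _ => (m : EReal)) ∈ H → ∀ n : ℕ, ∀ ε : ℝ, 0 < ε →
    ∃ K : Set Ω, IsCompact K ∧
      (fun x => (m : EReal) - (ε : EReal) + (Kᶜ).indicator (fun _ => (n : EReal)) x) ∈ H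

/-- `H` is closed under `liminf`: `liminf_n h_n ∈ H` for every sequence `(h_n)` in `H`
with `h_n ≥ c` for some constant `c ∈ ℝ`. -/
def LiminfClosedB (H : Set (Ω → EReal)) : Prop :=
  ∀ h : ℕ → Ω → EReal, (∀ n, h n ∈ H) → (∃ c : ℝ, ∀ n x, (c : EReal) ≤ h n x) →
    (fun x => liminf (fun n => h n x) atTop) ∈ H

/-- `H` is convex. -/
def ConvexB (H : Set (Ω → EReal)) : Prop :=
  ∀ f ∈ H, ∀ g ∈ H, ∀ t : ℝ, 0 ≤ t → t ≤ 1 →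
    (fun x => (t : EReal) * f x + ((1 - t : ℝ) : EReal) * g x) ∈ H

/-- `h` is (the coercion of) a bounded continuous real-valued function. -/
def IsCbB (h : Ω → EReal) : Prop :=
  Continuous h ∧ ∃ C : ℝ, ∀ x, -(C : EReal) ≤ h x ∧ h x ≤ (C : EReal)

/-- `h` is (the coercion of) a bounded upper semicontinuous real-valued function. -/
def IsUbB (h : Ω → EReal) : Prop :=
  UpperSemicontinuous h ∧ ∃ C : ℝ, ∀ x, -(C : EReal) ≤ h x ∧ h x ≤ (C : EReal)

/-- `H` is regular: for every Borel probability measure `μ`, the supremum of `⟨h,μ⟩` over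
`H ∩ U_b` coincides with the supremum over `H ∩ C_b`. -/
def RegularB (H : Set (Ω → EReal)) : Prop :=
  ∀ μ : Measure Ω, IsProbabilityMeasure μ →
    sSup {x : EReal | ∃ h ∈ H, IsUbB h ∧ x = ePair h μ} =
      sSup {x : EReal | ∃ h ∈ H, IsCbB h ∧ x = ePair h μ}

/-- The polar `H°` of `H ⊆ L⁰_{b-}`: all finite positive Borel measures `μ` with
`⟨f,μ⟩ ≤ 1` for all `f ∈ H`. -/
def polarB (H : Set (Ω → EReal)) : Set (Measure Ω) :=
  {μ | IsFiniteMeasure μ ∧ ∀ f ∈ H, ePair f μ ≤ 1}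

/-- The bipolar `H°°` of `H ⊆ L⁰_{b-}`. -/
def bipolarB (H : Set (Ω → EReal)) : Set (Ω → EReal) :=
  {f | f ∈ L0b ∧ ∀ μ ∈ polarB H, ePair f μ ≤ 1}

/-- The superhedging functional `φ(f) = inf{m ∈ ℝ : m + h ≥ f for some h ∈ H}` (the
infimum of the empty set being `+∞`). -/
noncomputable def sprice (H : Set (Ω → EReal)) (f : Ω → EReal) : EReal :=
  sInf ((fun m : ℝ => (m : EReal)) ''
    {m : ℝ | ∃ h ∈ H, ∀ x, f x ≤ (m : EReal) + h x})

end Defs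

open scoped Topology BoundedContinuousFunction

/-! ### Suslin representation and approximation by continuous functions -/

/-- Borel subsets of a metric space are Suslin sets: the sets `A` for which both `A` and `Aᶜ` are
such projections form a σ-algebra containing the open sets. -/
theorem exists_isClosed_proj_eq {X : Type*} [PseudoMetricSpace X] [MeasurableSpace X] [BorelSpace X]
    {A : Set X} (hA : MeasurableSet A) :
    ∃ C : Set (X × (ℕ → ℕ)), IsClosed C ∧ ∀ x, x ∈ A ↔ ∃ σ, (x, σ) ∈ C := by
  let Q : Set X → Prop := fun A =>
    ∃ C : Set (X × (ℕ → ℕ)), IsClosed C ∧ ∀ x, x ∈ A ↔ ∃ σ, (x, σ) ∈ C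
  have hclosed : ∀ A, IsClosed A → Q A := fun A hA =>
    ⟨Prod.fst ⁻¹' A, hA.preimage continuous_fst, fun x => ⟨fun h => ⟨0, h⟩, fun ⟨_, h⟩ => h⟩⟩
  have hunion : ∀ A : ℕ → Set X, (∀ n, Q (A n)) → Q (⋃ n, A n) := by
    intro A hA
    choose C hC hAC using hA
    -- The coordinate `σ 0` encodes which set of the union is used, the shifted sequence a witness.
    refine ⟨{p | ((p.1, fun i => p.2 (i + 1)) : X × (ℕ → ℕ)) ∈ C (p.2 0)}, ?_, fun x => ?_⟩
    · have : {p : X × (ℕ → ℕ) | ((p.1, fun i => p.2 (i + 1)) : X × (ℕ → ℕ)) ∈ C (p.2 0)}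
          = ⋂ n : ℕ, ({p | p.2 0 ≠ n} ∪ {p | ((p.1, fun i => p.2 (i + 1)) : X × (ℕ → ℕ)) ∈ C n}) := by
        ext p
        simp only [Set.mem_ofPred_eq, Set.mem_iInter, Set.mem_union]
        refine ⟨fun h n => ?_, fun h => (h _).resolve_left fun h => h rfl⟩
        by_cases hn : p.2 0 = n
        · exact Or.inr (hn ▸ h)
        · exact Or.inl hn
      rw [this]
      refine isClosed_iInter fun n => IsClosed.union ?_ ?_
      · have : Continuous fun p : X × (ℕ → ℕ) => p.2 0 := by fun_prop
        exact (isClosed_discrete ({n}ᶜ : Set ℕ)).preimage this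
      · exact (hC n).preimage (by fun_prop)
    · simp only [Set.mem_iUnion, hAC, Set.mem_ofPred_eq]
      constructor
      · rintro ⟨n, σ, h⟩
        exact ⟨fun i => Nat.casesOn i n σ, h⟩
      · rintro ⟨σ, h⟩
        exact ⟨σ 0, _, h⟩
  have hinter : ∀ A : ℕ → Set X, (∀ n, Q (A n)) → Q (⋂ n, A n) := by
    intro A hA
    choose C hC hAC using hA
    -- A single sequence codes one witness for each `n` through the pairing `ℕ × ℕ ≃ ℕ`.
    refine ⟨⋂ n, {p | ((p.1, fun i => p.2 (Nat.pair n i)) : X × (ℕ → ℕ)) ∈ C n},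
      isClosed_iInter fun n => (hC n).preimage (by fun_prop), fun x => ?_⟩
    simp only [Set.mem_iInter, hAC, Set.mem_ofPred_eq]
    constructor
    · intro h
      choose σ hσ using h
      exact ⟨fun j => σ j.unpair.1 j.unpair.2, fun n => by simpa using hσ n⟩
    · rintro ⟨σ, h⟩ n
      exact ⟨_, h n⟩
  have hopen : ∀ U, IsOpen U → Q U := by
    intro U hU
    obtain ⟨F, hF, -, hFU, -⟩ := hU.exists_iUnion_isClosed
    rw [← hFU]
    exact hunion F fun n => hclosed _ (hF n)
  have key : Q A ∧ Q Aᶜ := by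
    induction A, hA using MeasurableSet.induction_on_open with
    | isOpen U hU => exact ⟨hopen U hU, hclosed _ hU.isClosed_compl⟩
    | compl t _ ih => exact ⟨ih.2, by rw [compl_compl]; exact ih.1⟩
    | iUnion f _ _ ih =>
      refine ⟨hunion f fun n => (ih n).1, ?_⟩
      rw [Set.compl_iUnion]
      exact hinter _ fun n => (ih n).2
  exact key.1

/-- A capacitability theorem for functions. If `P` is inherited by smaller functions and by pointwise
limits of functions bounded below by `a`, and fails for a bounded Borel function `f`, then it fails
for every term of a decreasing sequence of bounded continuous functions whose limit is at most `f`. -/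
theorem exists_antitone_continuous_of_not {Ω : Type*} [MetricSpace Ω] [MeasurableSpace Ω]
    [BorelSpace Ω] (P : (Ω → ℝ) → Prop) {a b : ℝ}
    (hmono : ∀ g g' : Ω → ℝ, (∀ x, g x ≤ g' x) → P g' → P g)
    (hup : ∀ (g : ℕ → Ω → ℝ) (g' : Ω → ℝ), (∀ n x, a ≤ g n x) →
      (∀ x, Tendsto (fun n => g n x) atTop (𝓝 (g' x))) → (∀ n, P (g n)) → P g')
    {f : Ω → ℝ} (hf : Measurable f) (hab : ∀ x, a ≤ f x ∧ f x ≤ b) (hPf : ¬ P f) :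
    ∃ u : ℕ → Ω → ℝ, (∀ n, Continuous (u n)) ∧ Antitone u ∧ (∀ n x, a ≤ u n x ∧ u n x ≤ b) ∧
      (∀ n, ¬ P (u n)) ∧ ∀ x, ∀ ε : ℝ, 0 < ε → ∃ n, u n x ≤ f x + ε := by
  obtain ⟨C, hC, hfC⟩ := exists_isClosed_proj_eq
    (measurableSet_le (measurable_snd (α := Ω) (β := ℝ)) (hf.comp measurable_fst))
  have hfC' : ∀ x t, t ≤ f x ↔ ∃ σ, ((x, t), σ) ∈ C := fun x t => hfC (x, t)
  -- `G S x = sup (V S x)` is the part of `f x` witnessed by the sequences in `S`; the value `a` is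
  -- added to `V S x` to keep it nonempty. One has `f ≤ G univ`, and `G` is continuous along
  -- increasing unions of sets `S`.
  let V : Set (ℕ → ℕ) → Ω → Set ℝ := fun S x =>
    {t | (a ≤ t ∧ t ≤ b) ∧ (t = a ∨ ∃ σ ∈ S, ((x, t), σ) ∈ C)}
  let G : Set (ℕ → ℕ) → Ω → ℝ := fun S x => sSup (V S x)
  have hVb : ∀ S x, BddAbove (V S x) := fun S x => ⟨b, fun t ht => ht.1.2⟩
  have hVa : ∀ S x, a ∈ V S x := fun S x =>
    ⟨⟨le_rfl, (hab x).1.trans (hab x).2⟩, Or.inl rfl⟩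
  have hGa : ∀ S x, a ≤ G S x := fun S x => le_csSup (hVb S x) (hVa S x)
  have hGb : ∀ S x, G S x ≤ b := fun S x => csSup_le ⟨a, hVa S x⟩ fun t ht => ht.1.2
  have hGmono : ∀ S S' : Set (ℕ → ℕ), S ⊆ S' → ∀ x, G S x ≤ G S' x := fun S S' h x =>
    csSup_le_csSup (hVb S' x) ⟨a, hVa S x⟩
      fun t ht => ⟨ht.1, ht.2.imp_right fun ⟨σ, hσ, hc⟩ => ⟨σ, h hσ, hc⟩⟩
  have hG0 : ¬ P (G Set.univ) := by
    refine fun h => hPf (hmono _ _ (fun x => ?_) h)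
    obtain ⟨σ, hσ⟩ := (hfC' x (f x)).1 le_rfl
    exact le_csSup (hVb _ x) ⟨hab x, Or.inr ⟨σ, trivial, hσ⟩⟩
  have hstep : ∀ (n : ℕ) (S : Set (ℕ → ℕ)), ∃ m : ℕ,
      ¬ P (G S) → ¬ P (G (S ∩ {σ | σ n ≤ m})) := by
    intro n S
    by_contra! hcon
    refine (hcon 0).1 (hup (fun m => G (S ∩ {σ | σ n ≤ m})) _ (fun m x => hGa _ x) (fun x => ?_)
      fun m => (hcon m).2)
    refine tendsto_atTop_isLUB (fun m m' hm => hGmono _ _ ?_ x)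
      ⟨?_, fun M hM => ?_⟩
    · exact Set.inter_subset_inter_right S fun σ hσ => le_trans hσ hm
    · rintro _ ⟨m, rfl⟩
      exact hGmono _ _ Set.inter_subset_left x
    · refine csSup_le ⟨a, hVa S x⟩ fun t ht => ?_
      rcases ht.2 with rfl | ⟨σ, hσ, hc⟩
      · exact (hGa _ x).trans (hM (Set.mem_range_self 0))
      · have hmem : t ∈ V (S ∩ {σ' | σ' n ≤ σ n}) x :=
          ⟨ht.1, Or.inr ⟨σ, ⟨hσ, le_refl (σ n)⟩, hc⟩⟩
        exact (le_csSup (hVb _ x) hmem).trans (hM (Set.mem_range_self (σ n)))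
  choose m hm using hstep
  -- The sequences in `S n` are bounded in the first `n` coordinates, so that `⋂ n, S n` is compact.
  let S : ℕ → Set (ℕ → ℕ) := fun n =>
    Nat.rec Set.univ (fun n S => S ∩ {σ | σ n ≤ m n S}) n
  have hS : ∀ n, S (n + 1) = S n ∩ {σ | σ n ≤ m n (S n)} := fun n => rfl
  have hSP : ∀ n, ¬ P (G (S n)) := by
    intro n
    induction n with
    | zero => exact hG0
    | succ n ih => rw [hS]; exact hm n (S n) ih
  have hSanti : Antitone S := antitone_nat_of_succ_le fun n => by
    rw [hS]; exact Set.inter_subset_left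
  have hSk : ∀ i n, i < n → ∀ σ ∈ S n, σ i ≤ m i (S i) := fun i n hin σ hσ =>
    (hSanti (Nat.succ_le_of_lt hin) hσ).2
  -- The smallest `n`-Lipschitz majorant of `G (S n)`.
  let u : ℕ → Ω → ℝ := fun n x => ⨆ y, (G (S n) y - n * dist x y)
  have hub : ∀ n x, BddAbove (Set.range fun y => G (S n) y - n * dist x y) := by
    rintro n x
    refine ⟨b, ?_⟩
    rintro _ ⟨y, rfl⟩
    have := hGb (S n) y
    have : 0 ≤ (n : ℝ) * dist x y := by positivity
    dsimp only; linarith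
  have hGu : ∀ n x, G (S n) x ≤ u n x := fun n x => by
    simpa using le_ciSup (hub n x) x
  refine ⟨u, fun n => ?_, ?_, fun n x => ⟨(hGa _ x).trans (hGu n x), ?_⟩, fun n h => ?_, ?_⟩
  · refine (LipschitzWith.of_le_add_mul (n : ℝ≥0) fun x y => ?_).continuous
    have : Nonempty Ω := ⟨x⟩
    refine ciSup_le fun z => ?_
    have h1 := le_ciSup (hub n y) z
    have h2 : (n : ℝ) * dist y z ≤ n * (dist x y + dist x z) := by
      gcongr; rw [dist_comm x y]; exact dist_triangle _ _ _
    simp only [NNReal.coe_natCast, u]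
    linarith
  · intro n n' hn x
    have : Nonempty Ω := ⟨x⟩
    refine ciSup_mono (hub n x) fun y => ?_
    have h1 := hGmono _ _ (hSanti hn) y
    have h2 : (n : ℝ) * dist x y ≤ n' * dist x y := by gcongr
    linarith
  · have : Nonempty Ω := ⟨x⟩
    refine ciSup_le fun y => ?_
    have := hGb (S n) y
    have : 0 ≤ (n : ℝ) * dist x y := by positivity
    linarith
  · exact hSP n (hmono _ _ (hGu n) h)
  · intro x ε hε
    by_contra! hcon
    have h1 : ∀ n : ℕ, ∃ (y : Ω) (t : ℝ) (σ : ℕ → ℕ), σ ∈ S n ∧ ((y, t), σ) ∈ C ∧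
        (a ≤ t ∧ t ≤ b) ∧ f x + ε + n * dist x y < t := by
      intro n
      have : Nonempty Ω := ⟨x⟩
      obtain ⟨y, hy⟩ := exists_lt_of_lt_ciSup (hcon n)
      obtain ⟨t, ht, hlt⟩ := exists_lt_of_lt_csSup ⟨a, hVa (S n) y⟩
        (show f x + ε + n * dist x y < G (S n) y by linarith)
      have hat : t ≠ a := by
        have := (hab x).1
        have : 0 ≤ (n : ℝ) * dist x y := by positivity
        intro h; linarith
      obtain ⟨σ, hσ, hc⟩ := ht.2.resolve_left hat
      exact ⟨y, t, σ, hσ, hc, ht.1, hlt⟩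
    choose y t σ hσ hc ht hlt using h1
    have hy : Tendsto y atTop (𝓝 x) := by
      rw [tendsto_iff_dist_tendsto_zero]
      refine squeeze_zero' (Eventually.of_forall fun n => dist_nonneg)
        (g := fun n : ℕ => (b - f x) / n) ?_ (tendsto_const_div_atTop_nhds_zero_nat _)
      filter_upwards [eventually_gt_atTop 0] with n hn
      rw [le_div_iff₀ (by exact_mod_cast hn), dist_comm, mul_comm]
      have := hlt n
      have := (ht n).2
      linarith
    -- The truncations `τ n` of `σ n` live in a compact product and agree with `σ n` in the first `n`
    -- coordinates, so a cluster point of `τ` is also one of `σ`.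
    let K : Set (ℝ × (ℕ → ℕ)) := Set.Icc a b ×ˢ Set.pi Set.univ fun i => Set.Iic (m i (S i))
    have hK : IsCompact K := isCompact_Icc.prod
      (isCompact_univ_pi fun i => (Set.finite_Iic _).isCompact)
    let τ : ℕ → ℕ → ℕ := fun n i => min (σ n i) (m i (S i))
    obtain ⟨⟨t', τ'⟩, -, φ, hφ, hlim⟩ := hK.tendsto_subseq (x := fun n => (t n, τ n))
      fun n => ⟨ht n, fun i _ => Set.mem_Iic.2 (Nat.min_le_right (σ n i) _)⟩
    have ht' : Tendsto (t ∘ φ) atTop (𝓝 t') := (continuous_fst.tendsto _).comp hlim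
    have hτ' : Tendsto (τ ∘ φ) atTop (𝓝 τ') := (continuous_snd.tendsto _).comp hlim
    have hσ' : Tendsto (σ ∘ φ) atTop (𝓝 τ') := by
      rw [tendsto_pi_nhds] at hτ' ⊢
      intro i
      refine (hτ' i).congr' ?_
      filter_upwards [hφ.tendsto_atTop.eventually_gt_atTop i] with n hn
      exact min_eq_left (hSk i (φ n) hn _ (hσ _))
    have hmem : ((x, t'), τ') ∈ C := hC.mem_of_tendsto
      (((hy.comp hφ.tendsto_atTop).prodMk_nhds ht').prodMk_nhds hσ')
      (Eventually.of_forall fun n => hc (φ n))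
    have h2 : t' ≤ f x := (hfC' x t').2 ⟨τ', hmem⟩
    have h3 : f x + ε ≤ t' := ge_of_tendsto' ht' fun n => by
      have := hlt (φ n)
      have h0 : 0 ≤ (φ n : ℝ) * dist x (y (φ n)) := by positivity
      simp only [Function.comp]
      linarith
    linarith

/-! ### Tight functionals and separation by measures -/

/-- Riesz representation for tight positive functionals on the bounded continuous functions of a
metric space. The functional is represented on the Stone–Čech compactification; tightness makes the
representing measure `ν` live on the σ-compact image of `S`, from which it is pushed back to `Ω`. -/
theorem exists_measure_of_tight {Ω : Type*} [MetricSpace Ω] [MeasurableSpace Ω] [BorelSpace Ω]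
    (L : (Ω →ᵇ ℝ) →ₗ[ℝ] ℝ) (hpos : ∀ v, (∀ x, 0 ≤ v x) → 0 ≤ L v)
    (htight : ∀ ε : ℝ, 0 < ε → ∃ K : Set Ω, IsCompact K ∧ ∀ v : Ω →ᵇ ℝ,
      (∀ x, 0 ≤ v x) → (∀ x, v x ≤ 1) → (∀ x ∈ K, v x = 0) → L v ≤ ε) :
    ∃ μ : Measure Ω, IsFiniteMeasure μ ∧ ∀ v : Ω →ᵇ ℝ, ∫ x, v x ∂μ = L v := by
  classical
  rcases isEmpty_or_nonempty Ω with hΩ | ⟨⟨x₀⟩⟩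
  · refine ⟨0, inferInstance, fun v => ?_⟩
    have : v = 0 := by ext x; exact hΩ.elim x
    simp [this]
  let _ : MeasurableSpace (StoneCech Ω) := borel _
  have : BorelSpace (StoneCech Ω) := ⟨rfl⟩
  let ι : Ω → StoneCech Ω := stoneCechUnit
  have hι : Topology.IsEmbedding ι := isEmbedding_stoneCechUnit
  let R : C(StoneCech Ω, ℝ) → (Ω →ᵇ ℝ) := fun g =>
    (BoundedContinuousFunction.mkOfCompact g).compContinuous ⟨ι, hι.continuous⟩
  let Λ : CompactlySupportedContinuousMap (StoneCech Ω) ℝ →ₚ[ℝ] ℝ :=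
    PositiveLinearMap.mk₀
      { toFun := fun g => L (R g.toContinuousMap)
        map_add' := fun g g' => by
          rw [← map_add]; rfl
        map_smul' := fun c g => by
          rw [← map_smul]; rfl }
      (fun g hg => hpos _ fun x => hg (ι x))
  set ν := RealRMK.rieszMeasure Λ with hν
  have hνfin : IsFiniteMeasure ν := inferInstance
  have hint : ∀ g : C(StoneCech Ω, ℝ), ∫ y, g y ∂ν = L (R g) := fun g =>
    RealRMK.integral_rieszMeasure Λ (CompactlySupportedContinuousMap.continuousMapEquiv g)
  have hK : ∀ n : ℕ, ∃ K : Set Ω, IsCompact K ∧ ν (ι '' K)ᶜ ≤ ENNReal.ofReal (1 / (n + 1)) := by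
    intro n
    obtain ⟨K, hKc, hK⟩ := htight (1 / (n + 1)) (by positivity)
    refine ⟨K, hKc, ?_⟩
    have hιK : IsCompact (ι '' K) := hKc.image hι.continuous
    rw [hιK.isClosed.isOpen_compl.measure_eq_iSup_isCompact]
    refine iSup_le fun C => iSup_le fun hCK => iSup_le fun hC => ?_
    obtain ⟨g, hg0, hg1, hg⟩ := exists_continuous_zero_one_of_isClosed hιK.isClosed hC.isClosed
      (Set.disjoint_left.2 fun y hy hyC => hCK hyC hy)
    refine (RealRMK.rieszMeasure_le_of_eq_one Λ
      (f := CompactlySupportedContinuousMap.continuousMapEquiv g) (fun y => (hg y).1) hC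
      (fun y hy => hg1 hy)).trans (ENNReal.ofReal_le_ofReal ?_)
    exact hK (R g) (fun x => (hg _).1) (fun x => (hg _).2) (fun x hx => hg0 ⟨x, hx, rfl⟩)
  choose K hKc hKν using hK
  set S : Set Ω := ⋃ n, K n with hS
  have hSν : ν (ι '' S)ᶜ = 0 := by
    have h1 : ∀ n : ℕ, ν (ι '' S)ᶜ ≤ ENNReal.ofReal (1 / (n + 1)) := fun n =>
      (measure_mono (Set.compl_subset_compl.2 (Set.image_mono (Set.subset_iUnion K n)))).trans
        (hKν n)
    have h2 : Tendsto (fun n : ℕ => ENNReal.ofReal (1 / ((n : ℝ) + 1))) atTop (𝓝 0) := by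
      simpa using ENNReal.tendsto_ofReal tendsto_one_div_add_atTop_nhds_zero_nat
    exact le_antisymm (ge_of_tendsto' h2 h1) bot_le
  have hmeasA : ∀ A : Set Ω, IsClosed A → MeasurableSet (ι '' (S ∩ A)) := by
    intro A hA
    rw [hS, Set.iUnion_inter, Set.image_iUnion]
    exact MeasurableSet.iUnion fun n =>
      (((hKc n).inter_right hA).image hι.continuous).isClosed.measurableSet
  have hSm : MeasurableSet (ι '' S) := by simpa using hmeasA Set.univ isClosed_univ
  -- A measurable left inverse of `ι` on `S`.
  let r : StoneCech Ω → Ω := fun y => if h : ∃ x ∈ S, ι x = y then h.choose else x₀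
  have hr : ∀ x ∈ S, r (ι x) = x := by
    intro x hx
    have h : ∃ x' ∈ S, ι x' = ι x := ⟨x, hx, rfl⟩
    simp only [r, dif_pos h]
    exact hι.injective h.choose_spec.2
  have hr' : ∀ y, y ∉ ι '' S → r y = x₀ := fun y hy => dif_neg hy
  have hrm : Measurable r := by
    refine measurable_of_isClosed fun A hA => ?_
    have : r ⁻¹' A = ι '' (S ∩ A) ∪ ((ι '' S)ᶜ ∩ {_y | x₀ ∈ A}) := by
      ext y
      by_cases hy : y ∈ ι '' S
      · obtain ⟨x, hx, rfl⟩ := hy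
        simp [hr x hx, hι.injective.eq_iff, hx]
      · have : y ∉ ι '' (S ∩ A) := fun h => hy (Set.image_mono Set.inter_subset_left h)
        simp only [Set.mem_preimage, hr' y hy, Set.mem_union, this, false_or, Set.mem_inter_iff,
          Set.mem_compl_iff, hy, not_false_eq_true, true_and, Set.mem_ofPred_eq]
    rw [this]
    exact (hmeasA A hA).union (hSm.compl.inter (MeasurableSet.const _))
  refine ⟨ν.map r, inferInstance, fun v => ?_⟩
  rw [integral_map hrm.aemeasurable v.continuous.aestronglyMeasurable]
  have hb : ∀ x, v x ∈ Set.Icc (-‖v‖) ‖v‖ := fun x => abs_le.1 (v.norm_coe_le_norm x)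
  let v' : Ω → Set.Icc (-‖v‖) ‖v‖ := fun x => ⟨v x, hb x⟩
  have hv' : Continuous v' := v.continuous.subtype_mk hb
  let w : C(StoneCech Ω, ℝ) :=
    ⟨fun y => (stoneCechExtend hv' y).1,
      continuous_subtype_val.comp (continuous_stoneCechExtend hv')⟩
  have hw : ∀ x, w (ι x) = v x := fun x =>
    congrArg Subtype.val (stoneCechExtend_stoneCechUnit hv' x)
  have hRw : R w = v := by ext x; exact hw x
  rw [show L v = L (R w) by rw [hRw], ← hint w]
  refine integral_congr_ae ?_
  have : ∀ᵐ y ∂ν, y ∈ ι '' S := hSν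
  filter_upwards [this] with y hy
  obtain ⟨x, hx, rfl⟩ := hy
  rw [hr x hx, hw]

/-- Hahn–Banach separation of a decreasing sequence, shifted down by `a`, from a convex set `W` of
bounded continuous functions, by a probability measure. The hypothesis `htight` forces the separating
functional to be tight. Monotonicity of `u` is what makes the union `E` of the sets
`{v | v ≥ u n - w}` convex. -/
theorem exists_isProbabilityMeasure_of_separated {Ω : Type*} [MetricSpace Ω] [MeasurableSpace Ω]
    [BorelSpace Ω] {W : Set (Ω →ᵇ ℝ)} (hW : Convex ℝ W) (hW0 : 0 ∈ W)
    (htight : ∀ n : ℕ, ∃ K : Set Ω, IsCompact K ∧ ∀ v : Ω →ᵇ ℝ,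
      (∀ x, 0 ≤ v x) → (∀ x, v x ≤ 1) → (∀ x ∈ K, v x = 0) →
        (n : ℝ) • v - BoundedContinuousFunction.const Ω (1 : ℝ) ∈ W)
    {u : ℕ → Ω →ᵇ ℝ} (hu : ∀ n m, n ≤ m → ∀ x, u m x ≤ u n x) {a : ℝ}
    (hsep : ∀ n, ∀ w ∈ W, ¬ ∀ x, u n x - a ≤ w x) :
    ∃ μ : Measure Ω, IsProbabilityMeasure μ ∧
      ∀ n, ∀ w ∈ W, ∫ x, w x ∂μ + a ≤ ∫ x, u n x ∂μ := by
  let c : ℝ → Ω →ᵇ ℝ := fun r => BoundedContinuousFunction.const Ω r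
  have hc : ∀ r, c r = r • c 1 := fun r => by ext x; simp [c]
  let E : Set (Ω →ᵇ ℝ) := {v | ∃ n, ∃ w ∈ W, ∀ x, u n x - w x ≤ v x}
  let O : Set (Ω →ᵇ ℝ) := {v | ∃ δ : ℝ, 0 < δ ∧ ∀ x, v x ≤ a - δ}
  have hE : Convex ℝ E := by
    rintro v ⟨n, w, hw, hv⟩ v' ⟨n', w', hw', hv'⟩ s t hs ht hst
    refine ⟨max n n', s • w + t • w', hW hw hw' hs ht hst, fun x => ?_⟩
    have h1 := mul_le_mul_of_nonneg_left
      ((sub_le_sub_right (hu n _ (le_max_left n n') x) (w x)).trans (hv x)) hs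
    have h2 := mul_le_mul_of_nonneg_left
      ((sub_le_sub_right (hu n' _ (le_max_right n n') x) (w' x)).trans (hv' x)) ht
    have h3 : u (max n n') x = s * u (max n n') x + t * u (max n n') x := by
      rw [← add_mul, hst, one_mul]
    simp only [BoundedContinuousFunction.coe_add, BoundedContinuousFunction.coe_smul, Pi.add_apply,
      smul_eq_mul]
    linarith
  have hO : Convex ℝ O := by
    rintro v ⟨δ, hδ, hv⟩ v' ⟨δ', hδ', hv'⟩ s t hs ht hst
    refine ⟨min δ δ', lt_min hδ hδ', fun x => ?_⟩
    have h1 := mul_le_mul_of_nonneg_left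
      ((hv x).trans (sub_le_sub_left (min_le_left δ δ') a)) hs
    have h2 := mul_le_mul_of_nonneg_left
      ((hv' x).trans (sub_le_sub_left (min_le_right δ δ') a)) ht
    have h3 : a - min δ δ' = s * (a - min δ δ') + t * (a - min δ δ') := by
      rw [← add_mul, hst, one_mul]
    simp only [BoundedContinuousFunction.coe_add, BoundedContinuousFunction.coe_smul, Pi.add_apply,
      smul_eq_mul]
    linarith
  have hOo : IsOpen O := by
    rw [Metric.isOpen_iff]
    rintro v ⟨δ, hδ, hv⟩
    refine ⟨δ / 2, by positivity, fun v' hv' => ⟨δ / 2, by positivity, fun x => ?_⟩⟩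
    have h1 := (BoundedContinuousFunction.dist_coe_le_dist (f := v') (g := v) x).trans
      (Metric.mem_ball.1 hv').le
    rw [Real.dist_eq] at h1
    linarith [(abs_le.1 h1).2, hv x]
  have hdisj : Disjoint O E := by
    rw [Set.disjoint_left]
    rintro v ⟨δ, hδ, hv⟩ ⟨n, w, hw, hv'⟩
    exact hsep n w hw fun x => by linarith [hv x, hv' x]
  obtain ⟨F, s, hFO, hFE⟩ := geometric_hahn_banach_open hO hOo hE hdisj
  have hE0 : u 0 ∈ E := ⟨0, 0, hW0, fun x => by simp⟩
  have hFpos : ∀ v : Ω →ᵇ ℝ, (∀ x, 0 ≤ v x) → 0 ≤ F v := by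
    intro v hv
    by_contra! hneg
    -- `F` is bounded above on `O`, which is stable under subtracting nonnegative functions.
    have ht : 0 ≤ |s - F (c (a - 1))| / (-F v) := div_nonneg (abs_nonneg _) (by linarith)
    have h1 := hFO (c (a - 1) - (|s - F (c (a - 1))| / (-F v)) • v) ⟨1, one_pos, fun x => by
      have := mul_nonneg ht (hv x)
      simp only [BoundedContinuousFunction.coe_sub, BoundedContinuousFunction.coe_smul,
        Pi.sub_apply, smul_eq_mul, c, BoundedContinuousFunction.const_apply]
      linarith⟩
    have h2 : |s - F (c (a - 1))| / (-F v) * F v = -|s - F (c (a - 1))| := by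
      rw [div_neg, neg_mul, div_mul_cancel₀ _ hneg.ne]
    rw [map_sub, map_smul, smul_eq_mul, h2] at h1
    linarith [le_abs_self (s - F (c (a - 1)))]
  have hF1 : 0 < F (c 1) := by
    refine lt_of_le_of_ne (hFpos _ fun x => by simp [c]) fun h0 => ?_
    have hz : ∀ r, F (c r) = 0 := fun r => by rw [hc, map_smul, ← h0, smul_zero]
    have h1 := hFO (c (a - 1)) ⟨1, one_pos, fun x => by simp [c]⟩
    have h2 := hFE _ hE0
    have h3 := hFpos (c ‖u 0‖ - u 0) fun x => by
      simpa [c] using (le_abs_self _).trans ((u 0).norm_coe_le_norm x)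
    rw [map_sub, hz] at h3
    rw [hz] at h1
    linarith
  let L : (Ω →ᵇ ℝ) →ₗ[ℝ] ℝ := (F (c 1))⁻¹ • (F : (Ω →ᵇ ℝ) →ₗ[ℝ] ℝ)
  have hL : ∀ v, L v = (F (c 1))⁻¹ * F v := fun v => rfl
  have hLpos : ∀ v : Ω →ᵇ ℝ, (∀ x, 0 ≤ v x) → 0 ≤ L v := fun v hv =>
    mul_nonneg (inv_nonneg.2 hF1.le) (hFpos v hv)
  have hL1 : L (c 1) = 1 := inv_mul_cancel₀ hF1.ne'
  have hLE : ∀ v ∈ E, a ≤ L v := by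
    intro v hv
    refine le_of_forall_pos_sub_le fun δ hδ => ?_
    have h1 := (hFO (c (a - δ)) ⟨δ, hδ, fun x => by simp [c]⟩).le.trans (hFE v hv)
    rw [hc, map_smul, smul_eq_mul] at h1
    rw [hL, inv_mul_eq_div, le_div_iff₀ hF1]
    exact h1
  have hLW : ∀ n, ∀ w ∈ W, L w + a ≤ L (u n) := fun n w hw => by
    have := hLE (u n - w) ⟨n, w, hw, fun x => le_rfl⟩
    rw [map_sub] at this
    linarith
  obtain ⟨μ, hμ, hμL⟩ := exists_measure_of_tight L hLpos (by
    intro ε hε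
    -- Since `(n + 1) • v - 1 ∈ W`, one has `(n + 1) * L v ≤ L (u 0) + 1 - a`.
    obtain ⟨n, hn⟩ := exists_nat_gt ((L (u 0) + 1 - a) / ε)
    obtain ⟨K, hK, hKW⟩ := htight (n + 1)
    refine ⟨K, hK, fun v h0 h1 hv => ?_⟩
    have h2 := hLW 0 _ (hKW v h0 h1 hv)
    have h3 := hLpos v h0
    rw [map_sub, map_smul, show L (BoundedContinuousFunction.const Ω (1 : ℝ)) = 1 from hL1,
      smul_eq_mul] at h2
    rw [div_lt_iff₀ hε] at hn
    push_cast at h2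
    by_contra! h4
    have h5 : (n : ℝ) * ε ≤ n * L v := by gcongr
    linarith)
  refine ⟨μ, ⟨?_⟩, fun n w hw => ?_⟩
  · have h1 := hμL (c 1)
    rw [hL1] at h1
    have h2 : μ.real Set.univ = 1 := by simpa [c] using h1
    rw [measureReal_def, ENNReal.toReal_eq_one_iff] at h2
    exact h2
  · rw [hμL, hμL]
    exact hLW n w hw

/-! ### The pairing and closure properties of the bipolar -/

/-- Upper bounds on the pairing expressed by the Lebesgue integral of the nonnegative function
`f + c`, where `-c` is a lower bound of `f`. -/
theorem ePair_le_iff {Ω : Type*} [TopologicalSpace Ω] [MeasurableSpace Ω] {f : Ω → EReal}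
    (hf : Measurable f) {c : ℝ} (hc : 0 ≤ c) (hfc : ∀ x, ((-c : ℝ) : EReal) ≤ f x)
    (μ : Measure Ω) [IsFiniteMeasure μ] {r : ℝ} (hr : 0 ≤ r) :
    ePair f μ ≤ r ↔
      ∫⁻ x, (f x + c).toENNReal ∂μ ≤ ENNReal.ofReal r + ENNReal.ofReal c * μ Set.univ := by
  have hpt : ∀ x, (f x).toENNReal + ENNReal.ofReal c = (f x + c).toENNReal + (-f x).toENNReal := by
    intro x
    have hx := hfc x
    generalize f x = z at hx ⊢
    induction z using EReal.rec with
    | bot => exact absurd (le_bot_iff.1 hx) (EReal.coe_ne_bot _)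
    | top => simp
    | coe y =>
      have hy : -c ≤ y := by exact_mod_cast hx
      rw [← EReal.coe_add, ← EReal.coe_neg]
      simp only [EReal.real_coe_toENNReal]
      rcases le_total 0 y with h | h
      · rw [ENNReal.ofReal_of_nonpos (by linarith : -y ≤ 0), add_zero, ENNReal.ofReal_add h hc]
      · rw [ENNReal.ofReal_of_nonpos h, zero_add,
          ← ENNReal.ofReal_add (by linarith) (by linarith)]
        congr 1; ring
  have hfm := hf.ereal_toENNReal
  have hfm' : Measurable fun x => (-f x).toENNReal := hf.neg.ereal_toENNReal
  have hsum : ∫⁻ x, (f x).toENNReal ∂μ + ENNReal.ofReal c * μ Set.univ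
      = ∫⁻ x, (f x + c).toENNReal ∂μ + ∫⁻ x, (-f x).toENNReal ∂μ := by
    rw [← lintegral_const, ← lintegral_add_left hfm,
      ← lintegral_add_right _ hfm']
    exact lintegral_congr hpt
  have hN : ∫⁻ x, (-f x).toENNReal ∂μ ≠ ⊤ := by
    have hle : ∫⁻ x, (-f x).toENNReal ∂μ ≤ ENNReal.ofReal c * μ Set.univ := by
      rw [← lintegral_const]
      refine lintegral_mono fun x => ?_
      rw [← EReal.real_coe_toENNReal]
      refine EReal.toENNReal_le_toENNReal ?_
      rw [EReal.neg_le]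
      simpa using hfc x
    exact ne_top_of_le_ne_top (ENNReal.mul_ne_top ENNReal.ofReal_ne_top (measure_ne_top _ _)) hle
  have hcM : ENNReal.ofReal c * μ Set.univ ≠ ⊤ :=
    ENNReal.mul_ne_top ENNReal.ofReal_ne_top (measure_ne_top _ _)
  have hr' : (r : EReal) = ((ENNReal.ofReal r : ℝ≥0∞) : EReal) := by
    rw [EReal.coe_ennreal_ofReal, max_eq_left hr]
  -- `ERealPosPart` unfolds to `EReal.toENNReal`.
  change ((∫⁻ x, (f x).toENNReal ∂μ : ℝ≥0∞) : EReal)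
    - ((∫⁻ x, (-f x).toENNReal ∂μ : ℝ≥0∞) : EReal) ≤ r ↔ _
  rw [EReal.sub_le_iff_le_add (Or.inl (EReal.coe_ennreal_ne_bot _))
    (Or.inl (by simpa using hN)), hr', ← EReal.coe_ennreal_add, EReal.coe_ennreal_le_coe_ennreal_iff,
    ← ENNReal.add_le_add_iff_right hcM, hsum, add_right_comm, ENNReal.add_le_add_iff_right hN]

theorem ePair_coe {Ω : Type*} [TopologicalSpace Ω] [MeasurableSpace Ω] {μ : Measure Ω} {g : Ω → ℝ}
    (hg : Integrable g μ) : ePair (fun x => (g x : EReal)) μ = ((∫ x, g x ∂μ : ℝ) : EReal) := by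
  have h1 : ∫⁻ x, ENNReal.ofReal (g x) ∂μ ≠ ⊤ := hg.lintegral_lt_top.ne
  have h2 : ∫⁻ x, ENNReal.ofReal (-g x) ∂μ ≠ ⊤ := hg.neg.lintegral_lt_top.ne
  rw [integral_eq_lintegral_pos_part_sub_lintegral_neg_part hg, EReal.coe_sub,
    EReal.coe_ennreal_toReal h1, EReal.coe_ennreal_toReal h2]
  rfl

theorem exists_nonneg_lower_bound {Ω : Type*} {f : Ω → EReal} (h : ∃ c : ℝ, ∀ x, (c : EReal) ≤ f x) :
    ∃ c₀ : ℝ, 0 ≤ c₀ ∧ ∀ c, c₀ ≤ c → ∀ x, ((-c : ℝ) : EReal) ≤ f x := by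
  obtain ⟨c, hc⟩ := h
  refine ⟨max (-c) 0, le_max_right _ _, fun c' hc' x => le_trans ?_ (hc x)⟩
  exact_mod_cast (by linarith [le_max_left (-c) 0] : -c' ≤ c)

theorem convexB_bipolarB {Ω : Type*} [TopologicalSpace Ω] [MeasurableSpace Ω]
    (H : Set (Ω → EReal)) : ConvexB (bipolarB H) := by
  rintro f ⟨⟨hfm, hfb⟩, hf⟩ g ⟨⟨hgm, hgb⟩, hg⟩ t ht0 ht1
  obtain ⟨c₁, hc₁, hfc⟩ := exists_nonneg_lower_bound hfb
  obtain ⟨c₂, hc₂, hgc⟩ := exists_nonneg_lower_bound hgb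
  set c := max c₁ c₂
  have hc : 0 ≤ c := le_max_of_le_left hc₁
  replace hfc := hfc c (le_max_left _ _)
  replace hgc := hgc c (le_max_right _ _)
  have ht1' : 0 ≤ 1 - t := by linarith
  have hnn : ∀ y : EReal, ((-c : ℝ) : EReal) ≤ y → 0 ≤ y + c := fun y hy => by
    have := add_le_add_left hy (c : EReal)
    rwa [← EReal.coe_add, neg_add_cancel, EReal.coe_zero] at this
  have ht0e : (0 : EReal) ≤ t := by exact_mod_cast ht0
  have ht1e : (0 : EReal) ≤ ((1 - t : ℝ) : EReal) := by exact_mod_cast ht1'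
  have hsplit : ∀ x, (t : EReal) * f x + ((1 - t : ℝ) : EReal) * g x + c
      = (t : EReal) * (f x + c) + ((1 - t : ℝ) : EReal) * (g x + c) := fun x => by
    rw [EReal.left_distrib_of_nonneg_of_ne_top ht0e (EReal.coe_ne_top _),
      EReal.left_distrib_of_nonneg_of_ne_top ht1e (EReal.coe_ne_top _), add_add_add_comm,
      ← EReal.coe_mul, ← EReal.coe_mul, ← EReal.coe_add]
    congr 2; ring
  have hm : Measurable fun x => (t : EReal) * f x + ((1 - t : ℝ) : EReal) * g x :=
    (hfm.const_mul _).add (hgm.const_mul _)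
  have hlow : ∀ x, ((-c : ℝ) : EReal) ≤ (t : EReal) * f x + ((1 - t : ℝ) : EReal) * g x := by
    intro x
    have h : 0 ≤ (t : EReal) * f x + ((1 - t : ℝ) : EReal) * g x + c := by
      rw [hsplit]
      exact add_nonneg (mul_nonneg ht0e (hnn _ (hfc x))) (mul_nonneg ht1e (hnn _ (hgc x)))
    have := EReal.sub_le_of_le_add h
    simpa using this
  refine ⟨⟨hm, -c, hlow⟩, fun μ hμ => ?_⟩
  have := hμ.1
  have h1 := (ePair_le_iff hfm hc hfc μ zero_le_one).1 (by simpa using hf μ hμ)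
  have h2 := (ePair_le_iff hgm hc hgc μ zero_le_one).1 (by simpa using hg μ hμ)
  suffices h : ePair (fun x => (t : EReal) * f x + ((1 - t : ℝ) : EReal) * g x) μ ≤ (1 : ℝ) by
    simpa using h
  rw [ePair_le_iff hm hc hlow μ zero_le_one]
  have hpt : ∀ x, ((t : EReal) * f x + ((1 - t : ℝ) : EReal) * g x + c).toENNReal
      = ENNReal.ofReal t * (f x + c).toENNReal + ENNReal.ofReal (1 - t) * (g x + c).toENNReal := by
    intro x
    rw [hsplit, EReal.toENNReal_add (mul_nonneg ht0e (hnn _ (hfc x)))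
      (mul_nonneg ht1e (hnn _ (hgc x))), EReal.toENNReal_mul ht0e, EReal.toENNReal_mul ht1e]
    rfl
  have hfm' : Measurable fun x => (f x + c).toENNReal := (hfm.add_const _).ereal_toENNReal
  have hgm' : Measurable fun x => (g x + c).toENNReal := (hgm.add_const _).ereal_toENNReal
  simp_rw [hpt]
  rw [lintegral_add_left (hfm'.const_mul _), lintegral_const_mul _ hfm',
    lintegral_const_mul _ hgm']
  refine (add_le_add (mul_le_mul_right h1 _) (mul_le_mul_right h2 _)).trans ?_
  rw [← add_mul, ← ENNReal.ofReal_add ht0 ht1']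
  simp

/-- Fatou's lemma. -/
theorem liminfClosedB_bipolarB {Ω : Type*} [TopologicalSpace Ω] [MeasurableSpace Ω]
    (H : Set (Ω → EReal)) : LiminfClosedB (bipolarB H) := by
  rintro h hh ⟨c₀, hc₀⟩
  set c := max (-c₀) 0
  have hc : 0 ≤ c := le_max_right _ _
  have hhc : ∀ n x, ((-c : ℝ) : EReal) ≤ h n x := fun n x => le_trans
    (by exact_mod_cast (by linarith [le_max_left (-c₀) 0] : -c ≤ c₀)) (hc₀ n x)
  have hm : Measurable fun x => liminf (fun n => h n x) atTop :=
    Measurable.liminf fun n => (hh n).1.1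
  have hlow : ∀ x, ((-c : ℝ) : EReal) ≤ liminf (fun n => h n x) atTop := fun x =>
    le_liminf_of_le (by isBoundedDefault) (Eventually.of_forall fun n => hhc n x)
  refine ⟨⟨hm, -c, hlow⟩, fun μ hμ => ?_⟩
  have := hμ.1
  suffices hs : ePair (fun x => liminf (fun n => h n x) atTop) μ ≤ (1 : ℝ) by simpa using hs
  rw [ePair_le_iff hm hc hlow μ zero_le_one]
  have hpt : ∀ x, (liminf (fun n => h n x) atTop + c).toENNReal
      = liminf (fun n => (h n x + c).toENNReal) atTop := fun x => by
    have hmono : Monotone fun y : EReal => (y + c).toENNReal := fun y z hyz =>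
      EReal.toENNReal_le_toENNReal (add_le_add_left hyz _)
    have hcont : Continuous fun y : EReal => (y + c).toENNReal := by
      refine EReal.continuous_toENNReal.comp (continuous_iff_continuousAt.2 fun y => ?_)
      exact (EReal.continuousAt_add (p := (y, (c : EReal))) (by simp) (by simp)).comp
        (f := fun y : EReal => (y, (c : EReal))) (by fun_prop)
    exact hmono.map_liminf_of_continuousAt _ hcont.continuousAt
  simp_rw [hpt]
  refine (lintegral_liminf_le fun n => ((hh n).1.1.add_const _).ereal_toENNReal).trans ?_
  refine (liminf_le_liminf (Eventually.of_forall fun n => ?_)).trans (liminf_const _).le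
  exact (ePair_le_iff (hh n).1.1 hc (hhc n) μ zero_le_one).1 (by simpa using (hh n).2 μ hμ)

theorem ePair_smul_le_one_iff {Ω : Type*} [TopologicalSpace Ω] [MeasurableSpace Ω] {f : Ω → EReal}
    (hf : f ∈ L0b) (μ : Measure Ω) [IsFiniteMeasure μ] {s : ℝ} (hs : 0 < s) :
    ePair f (ENNReal.ofReal s⁻¹ • μ) ≤ 1 ↔ ePair f μ ≤ s := by
  obtain ⟨c, hc, hfc⟩ := exists_nonneg_lower_bound hf.2
  replace hfc := hfc c le_rfl
  have : IsFiniteMeasure (ENNReal.ofReal s⁻¹ • μ) := μ.smul_finite ENNReal.ofReal_ne_top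
  have h0 : ENNReal.ofReal s ≠ 0 := by simpa using hs
  rw [← EReal.coe_one, ePair_le_iff hf.1 hc hfc _ zero_le_one, ePair_le_iff hf.1 hc hfc _ hs.le,
    lintegral_smul_measure, Measure.smul_apply, smul_eq_mul, smul_eq_mul,
    ← ENNReal.mul_le_mul_iff_right h0 ENNReal.ofReal_ne_top, mul_add, ← mul_assoc,
    mul_left_comm (ENNReal.ofReal c), ← mul_assoc (ENNReal.ofReal s) (ENNReal.ofReal s⁻¹),
    ← ENNReal.ofReal_mul hs.le, mul_inv_cancel₀ hs.ne', ENNReal.ofReal_one, one_mul, one_mul,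
    mul_one]

/-- A bound on the pairing with the bounded upper semicontinuous minorants of `h` is a bound on the
pairing with `h`: truncate `h + c` and apply the Vitali–Carathéodory theorem. -/
theorem ePair_le_of_forall_usc {Ω : Type*} [MetricSpace Ω] [MeasurableSpace Ω] [BorelSpace Ω]
    {h : Ω → EReal} (hh : h ∈ L0b) (μ : Measure Ω) [IsFiniteMeasure μ] {β : ℝ} (hβ : 0 ≤ β)
    (H : ∀ u : Ω → EReal, u ∈ L0b → IsUbB u → (∀ x, u x ≤ h x) → ePair u μ ≤ β) :
    ePair h μ ≤ β := by
  obtain ⟨c, hc, hhc⟩ := exists_nonneg_lower_bound hh.2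
  replace hhc := hhc c le_rfl
  rw [ePair_le_iff hh.1 hc hhc μ hβ]
  have hm : Measurable fun x => (h x + c).toENNReal := (hh.1.add_const _).ereal_toENNReal
  have hlim : ∫⁻ x, (h x + c).toENNReal ∂μ
      = ⨆ N : ℕ, ∫⁻ x, min (h x + c).toENNReal N ∂μ := by
    rw [← lintegral_iSup (fun N => hm.min measurable_const)
      (fun N M hNM x => min_le_min_left _ (by exact_mod_cast hNM))]
    refine lintegral_congr fun x => ?_
    rw [← inf_iSup_eq, ENNReal.iSup_natCast, inf_top_eq]
  rw [hlim]
  refine iSup_le fun N => ?_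
  let φ : Ω → ℝ≥0 := fun x => (min (h x + c).toENNReal N).toNNReal
  have hφ : ∀ x, (φ x : ℝ≥0∞) = min (h x + c).toENNReal N := fun x =>
    ENNReal.coe_toNNReal (ne_top_of_le_ne_top (ENNReal.natCast_ne_top N) (min_le_right _ _))
  simp_rw [← hφ]
  have hφfin : ∫⁻ x, φ x ∂μ ≠ ⊤ := by
    refine ne_top_of_le_ne_top (b := (N : ℝ≥0∞) * μ Set.univ)
      (ENNReal.mul_ne_top (ENNReal.natCast_ne_top N) (measure_ne_top _ _)) ?_
    rw [← lintegral_const]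
    exact lintegral_mono fun x => (hφ x).le.trans (min_le_right _ _)
  refine ENNReal.le_of_forall_pos_le_add fun ε hε _ => ?_
  obtain ⟨g, hgφ, hgu, hg⟩ := exists_upperSemicontinuous_le_lintegral_le φ hφfin
    (ENNReal.coe_ne_zero.2 hε.ne')
  refine hg.trans (add_le_add_left ?_ _)
  let u : Ω → EReal := fun x => (((g x : ℝ) - c : ℝ) : EReal)
  have hucont : UpperSemicontinuous u :=
    Continuous.comp_upperSemicontinuous (g := fun t : ℝ≥0 => (((t : ℝ) - c : ℝ) : EReal))
      (continuous_coe_real_ereal.comp (by fun_prop)) hgu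
      (fun s t hst => EReal.coe_le_coe_iff.2 (sub_le_sub_right (NNReal.coe_le_coe.2 hst) c))
  have hulow : ∀ x, ((-c : ℝ) : EReal) ≤ u x := fun x => by
    exact EReal.coe_le_coe_iff.2 (by linarith [(g x).2])
  have hgN : ∀ x, (g x : ℝ≥0∞) ≤ N := fun x =>
    (ENNReal.coe_le_coe.2 (hgφ x)).trans ((hφ x).le.trans (min_le_right _ _))
  have huc : ∀ x, (u x + c).toENNReal = g x := fun x => by
    rw [← EReal.coe_add, sub_add_cancel, EReal.real_coe_toENNReal, ENNReal.ofReal_coe_nnreal]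
  have hub : IsUbB u := by
    refine ⟨hucont, max (N : ℝ) c, fun x => ⟨?_, ?_⟩⟩
    · rw [← EReal.coe_neg]
      exact le_trans (by exact_mod_cast neg_le_neg (le_max_right _ _)) (hulow x)
    · have h1 : (g x : ℝ) ≤ N := by
        have := hgN x
        rw [← ENNReal.coe_natCast, ENNReal.coe_le_coe] at this
        exact_mod_cast this
      have : (g x : ℝ) - c ≤ max (N : ℝ) c := by linarith [le_max_left (N : ℝ) c]
      exact EReal.coe_le_coe_iff.2 this
  have hul : u ∈ L0b := ⟨hucont.measurable, -c, hulow⟩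
  have huh : ∀ x, u x ≤ h x := fun x => by
    have h0 : (0 : EReal) ≤ h x + c := by
      have := add_le_add_left (hhc x) (c : EReal)
      rwa [← EReal.coe_add, neg_add_cancel, EReal.coe_zero] at this
    have h1 : ((g x : ℝ≥0∞) : EReal) ≤ h x + c := by
      rw [← EReal.coe_toENNReal h0, EReal.coe_ennreal_le_coe_ennreal_iff]
      exact (ENNReal.coe_le_coe.2 (hgφ x)).trans ((hφ x).le.trans (min_le_left _ _))
    simp only [u, EReal.coe_sub]
    exact EReal.sub_le_of_le_add h1
  have := (ePair_le_iff hul.1 hc hulow μ hβ).1 (H u hul hub huh)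
  simpa only [huc] using this

/-! ### The bipolar theorem -/

/-- Being dominated by an element of `H` is stable under pointwise limits bounded from below. -/
theorem exists_mem_ge_of_tendsto {Ω : Type*} {H : Set (Ω → EReal)} (hcl : LiminfClosedB H)
    {g : ℕ → Ω → EReal} {f : Ω → EReal} {c : ℝ} (hgc : ∀ n x, (c : EReal) ≤ g n x)
    (hg : ∀ n, ∃ h ∈ H, ∀ x, g n x ≤ h x)
    (hlim : ∀ x, Tendsto (fun n => g n x) atTop (𝓝 (f x))) : ∃ h ∈ H, ∀ x, f x ≤ h x := by
  choose h hH hgh using hg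
  refine ⟨_, hcl h hH ⟨c, fun n x => (hgc n x).trans (hgh n x)⟩, fun x => ?_⟩
  rw [← (hlim x).liminf_eq]
  exact liminf_le_liminf (Eventually.of_forall fun n => hgh n x)

theorem le_integral_of_forall_le_integral {Ω : Type*} [MeasurableSpace Ω] {μ : Measure Ω}
    [IsFiniteMeasure μ] {u : ℕ → Ω → ℝ} {f : Ω → ℝ} {M r : ℝ} (hf : Measurable f)
    (hum : ∀ n, Measurable (u n)) (hfM : ∀ x, |f x| ≤ M) (huM : ∀ n x, |u n x| ≤ M)
    (hu : Antitone u) (huf : ∀ x, ∀ ε : ℝ, 0 < ε → ∃ n, u n x ≤ f x + ε)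
    (hr : ∀ n, r ≤ ∫ x, u n x ∂μ) : r ≤ ∫ x, f x ∂μ := by
  have hmax : ∀ n x, ‖max (u n x) (f x)‖ ≤ M := fun n x =>
    abs_le.2 ⟨(abs_le.1 (hfM x)).1.trans (le_max_right _ _),
      max_le (abs_le.1 (huM n x)).2 (abs_le.1 (hfM x)).2⟩
  have hlim : Tendsto (fun n => ∫ x, max (u n x) (f x) ∂μ) atTop (𝓝 (∫ x, f x ∂μ)) := by
    refine tendsto_integral_of_dominated_convergence (fun _ => M)
      (fun n => ((hum n).max hf).aestronglyMeasurable) (integrable_const M)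
      (fun n => Eventually.of_forall (hmax n)) (Eventually.of_forall fun x => ?_)
    rw [Metric.tendsto_atTop]
    intro ε hε
    obtain ⟨n, hn⟩ := huf x (ε / 2) (by positivity)
    refine ⟨n, fun m hm => ?_⟩
    have h1 : u m x ≤ u n x := hu hm x
    rw [Real.dist_eq, abs_of_nonneg (sub_nonneg.2 (le_max_right _ _)), sub_lt_iff_lt_add]
    exact max_lt (by linarith) (by linarith)
  refine ge_of_tendsto' hlim fun n => (hr n).trans ?_
  exact integral_mono (Integrable.of_bound (hum n).aestronglyMeasurable M
      (Eventually.of_forall (huM n)))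
    (Integrable.of_bound ((hum n).max hf).aestronglyMeasurable M (Eventually.of_forall (hmax n)))
    fun x => le_max_left _ _

theorem coe_mem_L0b {Ω : Type*} [TopologicalSpace Ω] [MeasurableSpace Ω] [BorelSpace Ω]
    (w : Ω →ᵇ ℝ) : (fun x => (w x : EReal)) ∈ L0b :=
  ⟨w.continuous.measurable.coe_real_ereal, -‖w‖, fun x =>
    EReal.coe_le_coe_iff.2 (abs_le.1 (w.norm_coe_le_norm x)).1⟩

theorem IsCbB.exists_eq_coe {Ω : Type*} [TopologicalSpace Ω] {h : Ω → EReal} (hh : IsCbB h) :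
    ∃ w : Ω →ᵇ ℝ, h = fun x => (w x : EReal) := by
  obtain ⟨hc, C, hC⟩ := hh
  have hcoe : ∀ x, ((h x).toReal : EReal) = h x := fun x =>
    EReal.coe_toReal (ne_top_of_le_ne_top (EReal.coe_ne_top C) (hC x).2)
      (ne_bot_of_le_ne_bot (by rw [← EReal.coe_neg]; exact EReal.coe_ne_bot _) (hC x).1)
  have hcont : Continuous fun x => (h x).toReal := by
    rw [EReal.isEmbedding_coe.continuous_iff]
    simpa only [Function.comp_def, hcoe] using hc
  refine ⟨BoundedContinuousFunction.ofNormedAddCommGroup _ hcont C fun x => ?_, ?_⟩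
  · have h1 := (hC x).1
    have h2 := (hC x).2
    rw [← hcoe x] at h1 h2
    exact abs_le.2 ⟨by exact_mod_cast h1, by exact_mod_cast h2⟩
  · funext x
    exact (hcoe x).symm

/-- For regular monotone `H`, a bound on the integrals of the bounded continuous elements of `H` is a
bound on all pairings with elements of `H`. -/
theorem ePair_le_of_forall_bounded_continuous {Ω : Type*} [MetricSpace Ω] [MeasurableSpace Ω]
    [BorelSpace Ω] {H : Set (Ω → EReal)} (hsub : H ⊆ L0b) (hmono : MonotoneB H)
    (hreg : RegularB H) (μ : Measure Ω) [IsProbabilityMeasure μ] {β : ℝ} (hβ : 0 ≤ β)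
    (hW : ∀ w : Ω →ᵇ ℝ, (fun x => (w x : EReal)) ∈ H → ∫ x, w x ∂μ ≤ β) :
    ∀ h ∈ H, ePair h μ ≤ β := by
  intro h hh
  refine ePair_le_of_forall_usc (hsub hh) μ hβ fun u hu hub huh => ?_
  have huH : u ∈ H := hmono u hu ⟨h, hh, huh⟩
  refine (le_sSup (α := EReal) (s := {x | ∃ h ∈ H, IsUbB h ∧ x = ePair h μ})
    ⟨u, huH, hub, rfl⟩).trans ?_
  rw [hreg μ inferInstance]
  refine sSup_le ?_
  rintro _ ⟨g, hg, hgc, rfl⟩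
  obtain ⟨w, rfl⟩ := hgc.exists_eq_coe
  rw [ePair_coe (w.integrable μ)]
  exact EReal.coe_le_coe_iff.2 (hW w hg)

/-- The minorant `g` is the truncation of `f` at a large level. -/
theorem exists_truncation_not_dominated {Ω : Type*} [MeasurableSpace Ω] {H : Set (Ω → EReal)}
    (hcl : LiminfClosedB H) {f : Ω → EReal} (hf : Measurable f) {c : ℝ} (hc : 0 ≤ c)
    (hfc : ∀ x, ((-c : ℝ) : EReal) ≤ f x) (hfH : ¬ ∃ h ∈ H, ∀ x, f x ≤ h x) :
    ∃ (g : Ω → ℝ) (b a : ℝ), Measurable g ∧ (∀ x, -c ≤ g x ∧ g x ≤ b) ∧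
      (∀ x, (g x : EReal) ≤ f x) ∧ 0 < a ∧ ¬ ∃ h ∈ H, ∀ x, ((g x - a : ℝ) : EReal) ≤ h x := by
  obtain ⟨N, hN⟩ : ∃ N : ℕ, ¬ ∃ h ∈ H, ∀ x, min (f x) ((N : ℝ) : EReal) ≤ h x := by
    by_contra! hcon
    refine hfH (exists_mem_ge_of_tendsto hcl (c := -c)
      (g := fun N x => min (f x) ((N : ℝ) : EReal)) (fun N x => le_min (hfc x) ?_) hcon
      fun x => ?_)
    · exact EReal.coe_le_coe_iff.2 (by linarith [Nat.cast_nonneg (α := ℝ) N])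
    · have h1 : Tendsto (fun N : ℕ => ((N : ℝ) : EReal)) atTop (𝓝 ⊤) :=
        EReal.tendsto_coe_nhds_top_iff.2 tendsto_natCast_atTop_atTop
      simpa using (tendsto_const_nhds (x := f x)).min h1
  let g : Ω → ℝ := fun x => (min (f x) ((N : ℝ) : EReal)).toReal
  have hNc : ((-c : ℝ) : EReal) ≤ ((N : ℝ) : EReal) :=
    EReal.coe_le_coe_iff.2 (by linarith [Nat.cast_nonneg (α := ℝ) N])
  have hg : ∀ x, (g x : EReal) = min (f x) ((N : ℝ) : EReal) := fun x =>
    EReal.coe_toReal (ne_top_of_le_ne_top (EReal.coe_ne_top _) (min_le_right _ _))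
      (ne_bot_of_le_ne_bot (EReal.coe_ne_bot _) (le_min (hfc x) hNc))
  have hgc : ∀ x, -c ≤ g x := fun x => by
    rw [← EReal.coe_le_coe_iff, hg]
    exact le_min (hfc x) hNc
  obtain ⟨k, hk⟩ : ∃ k : ℕ, ¬ ∃ h ∈ H, ∀ x, ((g x - 1 / ((k : ℝ) + 1) : ℝ) : EReal) ≤ h x := by
    by_contra! hcon
    refine hN ?_
    simp_rw [← hg]
    refine exists_mem_ge_of_tendsto hcl (c := -c - 1)
      (g := fun k x => ((g x - 1 / ((k : ℝ) + 1) : ℝ) : EReal)) (fun k x => ?_) hcon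
      fun x => ?_
    · have h1 : 1 / ((k : ℝ) + 1) ≤ 1 := by
        rw [div_le_one (by positivity)]
        linarith [Nat.cast_nonneg (α := ℝ) k]
      exact EReal.coe_le_coe_iff.2 (by linarith [hgc x])
    · refine (continuous_coe_real_ereal.tendsto _).comp ?_
      simpa using tendsto_one_div_add_atTop_nhds_zero_nat.const_sub (g x)
  exact ⟨g, N, 1 / ((k : ℝ) + 1), (hf.min measurable_const).ereal_toReal,
    fun x => ⟨hgc x, by rw [← EReal.coe_le_coe_iff, hg]; exact min_le_right _ _⟩,
    fun x => by rw [hg]; exact min_le_left _ _, by positivity, hk⟩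

theorem exists_isProbabilityMeasure_separating {Ω : Type*} [MetricSpace Ω] [MeasurableSpace Ω]
    [BorelSpace Ω] {H : Set (Ω → EReal)} (hmono : MonotoneB H) (h0 : (fun _ => (0 : EReal)) ∈ H)
    (htight : TightB H) (hconv : ConvexB H) (hcl : LiminfClosedB H) {g : Ω → ℝ} {b c a : ℝ}
    (hg : Measurable g) (hgb : ∀ x, -c ≤ g x ∧ g x ≤ b)
    (hgH : ¬ ∃ h ∈ H, ∀ x, ((g x - a : ℝ) : EReal) ≤ h x) :
    ∃ μ : Measure Ω, IsProbabilityMeasure μ ∧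
      ∀ w : Ω →ᵇ ℝ, (fun x => (w x : EReal)) ∈ H → ∫ x, w x ∂μ + a ≤ ∫ x, g x ∂μ := by
  obtain ⟨u, huc, hu, hub, huH, hug⟩ := exists_antitone_continuous_of_not
    (fun g : Ω → ℝ => ∃ h ∈ H, ∀ x, ((g x - a : ℝ) : EReal) ≤ h x) (a := -c) (b := b)
    (fun v v' hv ⟨h, hh, hv'⟩ => ⟨h, hh, fun x =>
      (EReal.coe_le_coe_iff.2 (sub_le_sub_right (hv x) a)).trans (hv' x)⟩)
    (fun v v' hvc hlim hv => exists_mem_ge_of_tendsto hcl (c := -c - a)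
      (g := fun n x => ((v n x - a : ℝ) : EReal))
      (fun n x => EReal.coe_le_coe_iff.2 (sub_le_sub_right (hvc n x) a)) hv
      fun x => (continuous_coe_real_ereal.tendsto _).comp ((hlim x).sub_const a))
    hg hgb hgH
  have hM : ∀ t : ℝ, -c ≤ t ∧ t ≤ b → |t| ≤ max c b := fun t ht =>
    abs_le.2 ⟨by linarith [le_max_left c b], ht.2.trans (le_max_right _ _)⟩
  let U : ℕ → Ω →ᵇ ℝ := fun n => BoundedContinuousFunction.ofNormedAddCommGroup (u n) (huc n)
    (max c b) fun x => hM _ (hub n x)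
  let W : Set (Ω →ᵇ ℝ) := {w | (fun x => (w x : EReal)) ∈ H}
  have hWconv : Convex ℝ W := by
    intro v hv w hw s t hs ht hst
    have hs1 : s ≤ 1 := by linarith
    have := hconv _ hv _ hw s hs hs1
    have ht' : 1 - s = t := by linarith
    rw [ht'] at this
    simpa [W, EReal.coe_add, EReal.coe_mul] using this
  obtain ⟨μ, hμ, hμU⟩ := exists_isProbabilityMeasure_of_separated (W := W) hWconv
    (by simpa [W] using h0)
    (fun n => by
      obtain ⟨K, hK, hKH⟩ := htight 0 (by simpa using h0) n 1 one_pos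
      refine ⟨K, hK, fun v hv0 hv1 hvK => hmono _ (coe_mem_L0b _) ⟨_, hKH, fun x => ?_⟩⟩
      by_cases hx : x ∈ K
      · simp [hx, hvK x hx]
      · have h1 : (n : ℝ) * v x - 1 ≤ 0 - 1 + n := by
          have := mul_le_mul_of_nonneg_left (hv1 x) (Nat.cast_nonneg (α := ℝ) n)
          linarith
        rw [Set.indicator_of_mem (show x ∈ Kᶜ from hx)]
        have h2 : ((n : ℝ) • v - BoundedContinuousFunction.const Ω (1 : ℝ)) x ≤ 0 - 1 + n := h1
        exact_mod_cast EReal.coe_le_coe_iff.2 h2)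
    (u := U) (fun n m hnm x => hu hnm x) (a := a)
    (fun n w hw hcon => huH n ⟨_, hw, fun x => EReal.coe_le_coe_iff.2 (hcon x)⟩)
  exact ⟨μ, hμ, fun w hw => le_integral_of_forall_le_integral hg (fun n => (huc n).measurable)
    (fun x => hM _ (hgb x)) (fun n x => hM _ (hub n x)) hu hug fun n => hμU n w hw⟩

/-- The bipolar theorem proper: an `f ∈ H°°` outside `H` is separated from `H` by a measure in
`H°`. -/
theorem bipolarB_subset {Ω : Type*} [MetricSpace Ω] [MeasurableSpace Ω] [BorelSpace Ω]
    {H : Set (Ω → EReal)} (hsub : H ⊆ L0b) (hmono : MonotoneB H)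
    (h0 : (fun _ => (0 : EReal)) ∈ H) (hreg : RegularB H) (htight : TightB H)
    (hconv : ConvexB H) (hcl : LiminfClosedB H) : bipolarB H ⊆ H := by
  rintro f ⟨hfL, hf⟩
  by_contra hfH
  obtain ⟨c, hc, hfc⟩ := exists_nonneg_lower_bound hfL.2
  replace hfc := hfc c le_rfl
  obtain ⟨g, b, a, hg, hgb, hgf, ha, hgH⟩ := exists_truncation_not_dominated hcl hfL.1 hc hfc
    fun h => hfH (hmono f hfL h)
  obtain ⟨μ, hμ, hμW⟩ := exists_isProbabilityMeasure_separating hmono h0 htight hconv hcl hg hgb hgH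
  have hβ : 0 ≤ ∫ x, g x ∂μ - a := by
    have := hμW 0 (by simpa using h0)
    simp only [BoundedContinuousFunction.coe_zero, Pi.zero_apply, integral_zero] at this
    linarith
  have hμH := ePair_le_of_forall_bounded_continuous hsub hmono hreg μ hβ
    fun w hw => by linarith [hμW w hw]
  -- Any level in `[∫ g dμ - a, ∫ g dμ)` would do for rescaling, but it has to be positive.
  set s := ∫ x, g x ∂μ - a / 2 with hs
  have hs0 : 0 < s := by linarith
  have hν : ENNReal.ofReal s⁻¹ • μ ∈ polarB H :=
    ⟨μ.smul_finite ENNReal.ofReal_ne_top, fun h hh =>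
      (ePair_smul_le_one_iff (hsub hh) μ hs0).2
        ((hμH h hh).trans (EReal.coe_le_coe_iff.2 (by linarith)))⟩
  have h1 := (ePair_smul_le_one_iff hfL μ hs0).1 (hf _ hν)
  have hgm : Measurable fun x => (g x : EReal) := hg.coe_real_ereal
  have h2 : ePair (fun x => (g x : EReal)) μ ≤ s := by
    rw [ePair_le_iff hgm hc (fun x => EReal.coe_le_coe_iff.2 (hgb x).1) μ hs0.le]
    rw [ePair_le_iff hfL.1 hc hfc μ hs0.le] at h1
    exact (lintegral_mono fun x =>
      EReal.toENNReal_le_toENNReal (add_le_add_left (hgf x) _)).trans h1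
  have hgi : Integrable g μ := Integrable.of_bound hg.aestronglyMeasurable (max c b)
    (Eventually.of_forall fun x => abs_le.2
      ⟨by linarith [le_max_left c b, (hgb x).1], (hgb x).2.trans (le_max_right _ _)⟩)
  rw [ePair_coe hgi, EReal.coe_le_coe_iff] at h2
  linarith

/-- **Proposition 2.4** in Bartl–Kupper, "A pointwise bipolar theorem": let `Ω` be a metric
space and let `H ⊆ L⁰_{b-}` be monotone, normalized, regular and tight.  Then `H = H°°` if
and only if `H` is convex and closed under `liminf`. -/
theorem bipolar_tight
    {Ω : Type*} [MetricSpace Ω] [MeasurableSpace Ω] [BorelSpace Ω]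
    (H : Set (Ω → EReal)) (hsub : H ⊆ L0b)
    (hmono : MonotoneB H) (hnorm : NormalizedB H)
    (hreg : RegularB H) (htight : TightB H) :
    H = bipolarB H ↔ (ConvexB H ∧ LiminfClosedB H) := by
  refine ⟨fun h => ?_, fun ⟨hconv, hcl⟩ => Set.Subset.antisymm
    (fun f hf => ⟨hsub hf, fun μ hμ => hμ.2 f hf⟩)
    (bipolarB_subset hsub hmono hnorm.1 hreg htight hconv hcl)⟩
  exact ⟨h ▸ convexB_bipolarB H, h ▸ liminfClosedB_bipolarB H⟩
end
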